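/- arXiv:2208.09404 — 3 statements merged into one kernel-verified Lean document; each statement's English description precedes it below -/
import Mathlib

section
/- Let U be an open subset of ℝ^{2n} with n ≥ 2, and let ω be a smooth differential 2-form on U that is nondegenerate at every point. Suppose ω = f · ω₀ and ω = g · ω₁ on U, where ω₀ and ω₁ are smooth closed 2-forms and f, g : U → ℝ are smooth positive functions. Then d(log f) = d(log g) on U. -/
/-- The exterior derivative of a 2-form `ω` (given as a smooth family of continuous bilinear
forms) evaluated at `x` on the triple of vectors `(u, v, w)`:
`(dω)ₓ(u,v,w) = (D_u ω)(v,w) - (D_v ω)(u,w) + (D_w ω)(u,v)`. -/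
noncomputable def extDeriv2 {m : ℕ}
    (ω : (Fin m → ℝ) → ((Fin m → ℝ) →L[ℝ] (Fin m → ℝ) →L[ℝ] ℝ))
    (x u v w : Fin m → ℝ) : ℝ :=
  fderiv ℝ ω x u v w - fderiv ℝ ω x v u w + fderiv ℝ ω x w u v

theorem lee_smul {E F : Type*} [NormedAddCommGroup E] [NormedSpace ℝ E]
    [NormedAddCommGroup F] [NormedSpace ℝ F] (f : E → ℝ) (h : E → F) (x : E)
    (df : DifferentiableAt ℝ f x) (dh : DifferentiableAt ℝ h x) :
    fderiv ℝ (fun y => f y • h y) x = f x • fderiv ℝ h x + (fderiv ℝ f x).smulRight (h x) :=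
  fderiv_fun_smul df dh

theorem lee_aux {m : ℕ} {U : Set (Fin m → ℝ)} (hU : IsOpen U)
    (ω ω₀ : (Fin m → ℝ) → ((Fin m → ℝ) →L[ℝ] (Fin m → ℝ) →L[ℝ] ℝ))
    (hω₀ : ContDiffOn ℝ (⊤ : ℕ∞) ω₀ U)
    (hclosed₀ : ∀ x ∈ U, ∀ u v w, extDeriv2 ω₀ x u v w = 0)
    (f : (Fin m → ℝ) → ℝ) (hf : ContDiffOn ℝ (⊤ : ℕ∞) f U)
    (hfpos : ∀ x ∈ U, 0 < f x) (hωf : ∀ x ∈ U, ω x = f x • ω₀ x)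
    (x : Fin m → ℝ) (hx : x ∈ U) (u v w : Fin m → ℝ) :
    extDeriv2 ω x u v w =
      fderiv ℝ (fun y => Real.log (f y)) x u * ω x v w
      - fderiv ℝ (fun y => Real.log (f y)) x v * ω x u w
      + fderiv ℝ (fun y => Real.log (f y)) x w * ω x u v := by
  have hn : U ∈ nhds x := hU.mem_nhds hx
  have df : DifferentiableAt ℝ f x := (hf.contDiffAt hn).differentiableAt (by simp)
  have dω : DifferentiableAt ℝ ω₀ x := (hω₀.contDiffAt hn).differentiableAt (by simp)
  have hne : f x ≠ 0 := (hfpos x hx).ne'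
  have e : ω =ᶠ[nhds x] fun y => f y • ω₀ y := by
    filter_upwards [hn] with y hy using hωf y hy
  have hd : fderiv ℝ ω x = f x • fderiv ℝ ω₀ x + (fderiv ℝ f x).smulRight (ω₀ x) := by
    rw [e.fderiv_eq]
    exact lee_smul f ω₀ x df dω
  have hl : fderiv ℝ (fun y => Real.log (f y)) x = (f x)⁻¹ • fderiv ℝ f x :=
    fderiv.log df hne
  have hc := hclosed₀ x hx u v w
  unfold extDeriv2 at hc ⊢
  rw [hd, hl, hωf x hx]
  simp only [add_apply, smul_apply,
    ContinuousLinearMap.smulRight_apply, smul_eq_mul]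
  field_simp
  linear_combination (f x) * hc

theorem lee_linear {m : ℕ} (hm : 2 < m) (B : (Fin m → ℝ) →L[ℝ] (Fin m → ℝ) →L[ℝ] ℝ)
    (hnd : ∀ v, (∀ w, B v w = 0) → v = 0)
    (θ : (Fin m → ℝ) →L[ℝ] ℝ)
    (h : ∀ u v w, θ u * B v w - θ v * B u w + θ w * B u v = 0) : θ = 0 := by
  by_contra hθ
  obtain ⟨a, ha⟩ : ∃ a, θ a ≠ 0 := by
    by_contra! hc
    exact hθ (ContinuousLinearMap.ext hc)
  have hker := LinearMap.ker_ne_bot_of_finrank_lt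
    (f := (θ : (Fin m → ℝ) →ₗ[ℝ] ℝ).prod (B a : (Fin m → ℝ) →ₗ[ℝ] ℝ)) (by simpa using hm)
  obtain ⟨v, hv, hv0⟩ := Submodule.exists_mem_ne_zero_of_ne_bot hker
  have hv' : θ v = 0 ∧ B a v = 0 := by simpa using hv
  refine hv0 (hnd v fun w => ?_)
  have := h a v w
  rw [hv'.1, hv'.2] at this
  simpa [ha] using this

/-- Let `U ⊆ ℝ^{2n}` be open, `n ≥ 2`, and let `ω` be a smooth 2-form on `U`
that is nondegenerate at every point of `U`.  If `ω = f • ω₀ = g • ω₁` on `U` with `ω₀`, `ω₁`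
smooth closed 2-forms and `f`, `g` smooth positive functions, then `d(log f) = d(log g)`
on `U`. -/
theorem local_lee_forms_agree
    {n : ℕ} (hn : 2 ≤ n)
    (U : Set (Fin (2 * n) → ℝ)) (hU : IsOpen U)
    (ω ω₀ ω₁ : (Fin (2 * n) → ℝ) → ((Fin (2 * n) → ℝ) →L[ℝ] (Fin (2 * n) → ℝ) →L[ℝ] ℝ))
    (hω : ContDiffOn ℝ (⊤ : ℕ∞) ω U)
    (halt : ∀ x ∈ U, ∀ v, ω x v v = 0)
    (hnondeg : ∀ x ∈ U, ∀ v, (∀ w, ω x v w = 0) → v = 0)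
    (hω₀ : ContDiffOn ℝ (⊤ : ℕ∞) ω₀ U) (hω₁ : ContDiffOn ℝ (⊤ : ℕ∞) ω₁ U)
    (hclosed₀ : ∀ x ∈ U, ∀ u v w, extDeriv2 ω₀ x u v w = 0)
    (hclosed₁ : ∀ x ∈ U, ∀ u v w, extDeriv2 ω₁ x u v w = 0)
    (f g : (Fin (2 * n) → ℝ) → ℝ)
    (hf : ContDiffOn ℝ (⊤ : ℕ∞) f U) (hg : ContDiffOn ℝ (⊤ : ℕ∞) g U)
    (hfpos : ∀ x ∈ U, 0 < f x) (hgpos : ∀ x ∈ U, 0 < g x)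
    (hωf : ∀ x ∈ U, ω x = f x • ω₀ x)
    (hωg : ∀ x ∈ U, ω x = g x • ω₁ x) :
    ∀ x ∈ U, fderiv ℝ (fun y => Real.log (f y)) x = fderiv ℝ (fun y => Real.log (g y)) x := by
  intro x hx
  rw [← sub_eq_zero]
  refine lee_linear (by omega) (ω x) (hnondeg x hx) _ fun u v w => ?_
  have h1 := lee_aux hU ω ω₀ hω₀ hclosed₀ f hf hfpos hωf x hx u v w
  have h2 := lee_aux hU ω ω₁ hω₁ hclosed₁ g hg hgpos hωg x hx u v w
  simp only [sub_apply]
  linear_combination h2 - h1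
end

section
/- Let U be an open subset of ℝ^m, let α be a smooth closed 1-form on U, and let γ₀, γ₁ : [0,1] → U be smooth paths with γ₀(0) = γ₁(0) and γ₀(1) = γ₁(1) that are smoothly homotopic in U relative to their endpoints. Then ∫₀¹ α(γ₀(t))(γ₀′(t)) dt = ∫₀¹ α(γ₁(t))(γ₁′(t)) dt. -/
open Set

theorem curveIntegral_eq_of_eqOn_aux {m : ℕ} (α : (Fin m → ℝ) → ((Fin m → ℝ) →L[ℝ] ℝ))
    {a b : Fin m → ℝ} (p : Path a b) (g : ℝ → (Fin m → ℝ))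
    (h : EqOn p.extend g (Icc 0 1)) :
    curveIntegral α p = ∫ t in (0:ℝ)..1, α (g t) (derivWithin g (Icc 0 1) t) := by
  rw [curveIntegral_def]
  apply intervalIntegral.integral_congr
  intro t ht
  rw [uIcc_of_le zero_le_one] at ht
  simp only [curveIntegralFun_def]
  rw [h ht, derivWithin_congr h (h ht)]

/-- Let `α` be a smooth closed 1-form on an open set `U ⊆ ℝ^m`, and let
`γ₀, γ₁ : [0,1] → U` be smooth paths with the same endpoints which are smoothly homotopic in
`U` relative to their endpoints.  Then `∫₀¹ α(γ₀(t))(γ₀'(t)) dt = ∫₀¹ α(γ₁(t))(γ₁'(t)) dt`. -/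
theorem closed_one_form_integral_homotopy_invariant
    {m : ℕ} (U : Set (Fin m → ℝ)) (hU : IsOpen U)
    (α : (Fin m → ℝ) → ((Fin m → ℝ) →L[ℝ] ℝ))
    (hα : ContDiffOn ℝ (⊤ : ℕ∞) α U)
    (hαclosed : ∀ x ∈ U, ∀ u v, fderiv ℝ α x u v = fderiv ℝ α x v u)
    (γ₀ γ₁ : ℝ → (Fin m → ℝ))
    (hγ₀ : ContDiffOn ℝ (⊤ : ℕ∞) γ₀ (Icc 0 1)) (hγ₁ : ContDiffOn ℝ (⊤ : ℕ∞) γ₁ (Icc 0 1))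
    (hγ₀U : MapsTo γ₀ (Icc 0 1) U) (hγ₁U : MapsTo γ₁ (Icc 0 1) U)
    (hstart : γ₀ 0 = γ₁ 0) (hend : γ₀ 1 = γ₁ 1)
    -- a smooth homotopy `H : [0,1] × [0,1] → U` rel endpoints from `γ₀` to `γ₁`:
    (H : ℝ × ℝ → (Fin m → ℝ))
    (hH : ContDiffOn ℝ (⊤ : ℕ∞) H (Icc (0:ℝ) 1 ×ˢ Icc (0:ℝ) 1))
    (hHU : MapsTo H (Icc (0:ℝ) 1 ×ˢ Icc (0:ℝ) 1) U)
    (hH0 : ∀ t ∈ Icc (0:ℝ) 1, H (0, t) = γ₀ t)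
    (hH1 : ∀ t ∈ Icc (0:ℝ) 1, H (1, t) = γ₁ t)
    (hHstart : ∀ s ∈ Icc (0:ℝ) 1, H (s, 0) = γ₀ 0)
    (hHend : ∀ s ∈ Icc (0:ℝ) 1, H (s, 1) = γ₀ 1) :
    ∫ t in (0:ℝ)..1, α (γ₀ t) (derivWithin γ₀ (Icc 0 1) t)
      = ∫ t in (0:ℝ)..1, α (γ₁ t) (derivWithin γ₁ (Icc 0 1) t) := by
  have hHc : Continuous fun x : unitInterval × unitInterval => H ((x.1 : ℝ), (x.2 : ℝ)) :=
    hH.continuousOn.comp_continuous (by fun_prop) (fun x => ⟨x.1.2, x.2.2⟩)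
  have hc0 : Continuous fun t : unitInterval => γ₀ t :=
    hγ₀.continuousOn.comp_continuous (by fun_prop) (fun x => x.2)
  have hc1 : Continuous fun t : unitInterval => γ₁ t :=
    hγ₁.continuousOn.comp_continuous (by fun_prop) (fun x => x.2)
  let p₀ : Path (γ₀ 0) (γ₀ 1) := ⟨⟨fun t => γ₀ t, hc0⟩, by simp, by simp⟩
  let p₁ : Path (γ₁ 0) (γ₁ 1) := ⟨⟨fun t => γ₁ t, hc1⟩, by simp, by simp⟩
  let φ : (p₀ : C(unitInterval, Fin m → ℝ)).Homotopy (p₁ : C(unitInterval, Fin m → ℝ)) :=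
    { toFun := fun x => H ((x.1 : ℝ), (x.2 : ℝ))
      continuous_toFun := hHc
      map_zero_left := fun x => hH0 x x.2
      map_one_left := fun x => hH1 x x.2 }
  have hφ : ∀ x, φ x = H ((x.1 : ℝ), (x.2 : ℝ)) := fun _ => rfl
  have hsub : range φ ⊆ U := by
    rintro _ ⟨x, rfl⟩
    exact hHU ⟨x.1.2, x.2.2⟩
  have hd : ∀ x ∈ U, HasFDerivAt α (fderiv ℝ α x) x := fun x hx =>
    ((hα.contDiffAt (hU.mem_nhds hx)).differentiableAt (by simp)).hasFDerivAt
  have key := φ.curveIntegral_add_curveIntegral_eq_of_hasFDerivWithinAt (t := range φ) (ω := α)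
    (dω := fderiv ℝ α) (fun _ _ _ _ => mem_range_self _)
    (fun x hx => (hd x (hsub hx)).hasFDerivWithinAt)
    (by
      rw [(isCompact_range <| map_continuous _).isClosed.closure_eq]
      exact hα.continuousOn.mono hsub)
    (fun x hx u _ v _ => hαclosed x (hsub hx) u v)
    (by
      rw [← Prod.mk_zero_zero, ← Prod.mk_one_one, ← Icc_prod_Icc]
      refine (hH.of_le (WithTop.coe_le_coe.2 (le_top : (2 : ℕ∞) ≤ ⊤))).congr ?_
      rintro ⟨x, y⟩ ⟨hx, hy⟩
      lift x to unitInterval using hx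
      lift y to unitInterval using hy
      simp [hφ])
  have e0 := curveIntegral_eq_of_eqOn_aux α (φ.evalAt 0) (fun _ => γ₀ 0) (by
    intro t ht
    rw [Path.extend_apply _ ht]
    exact hHstart t ht)
  have e1 := curveIntegral_eq_of_eqOn_aux α (φ.evalAt 1) (fun _ => γ₀ 1) (by
    intro t ht
    rw [Path.extend_apply _ ht]
    exact hHend t ht)
  have f0 := curveIntegral_eq_of_eqOn_aux α p₀ γ₀ (by
    intro t ht
    rw [Path.extend_apply _ ht]
    rfl)
  have f1 := curveIntegral_eq_of_eqOn_aux α p₁ γ₁ (by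
    intro t ht
    rw [Path.extend_apply _ ht]
    rfl)
  rw [f0, f1, e0, e1] at key
  simpa using key
end

section
/- Let n ≥ 1, let ω_st = Σ_{i=1}^{n} dp_i ∧ dq_i be the standard symplectic form on ℝ^{2n}, let B_R ⊂ ℝ^{2n} be the standard closed ball of radius R centered at 0, and let D²_r × ℝ^{2n−2} = {(p₁,q₁,p₂,q₂,…,p_n,q_n) : p₁² + q₁² ≤ r²}. If R > r > 0, then there is no smooth embedding φ : B_R → ℝ^{2n} with image contained in D²_r × ℝ^{2n−2} such that φ*ω_st = ω_st, where (φ*ω_st)_x(u,v) = ω_st(Dφ_x(u), Dφ_x(v)) is the pullback of ω_st along φ. -/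
open Metric Set

/-- The standard symplectic form `ω_st = ∑ᵢ dpᵢ ∧ dqᵢ` on `ℝ^{2n}`, realized as
`EuclideanSpace ℝ (Fin n ⊕ Fin n)` with `p`-coordinates indexed by `Sum.inl` and
`q`-coordinates indexed by `Sum.inr`:
`ω_st(u, v) = ∑ᵢ (uₚᵢ vqᵢ - vₚᵢ uqᵢ)`. -/
def omegaSt {n : ℕ} (u v : EuclideanSpace ℝ (Fin n ⊕ Fin n)) : ℝ :=
  ∑ i : Fin n, (u (Sum.inl i) * v (Sum.inr i) - v (Sum.inl i) * u (Sum.inr i))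

section NsqPartB1
open MeasureTheory

lemma nsq_det_poly {E : Type*} [NormedAddCommGroup E] [NormedSpace ℝ E]
    [FiniteDimensional ℝ E] (M : E →L[ℝ] E) :
    ∃ p : Polynomial ℝ, p.natDegree ≤ Module.finrank ℝ E ∧
      ∀ t : ℝ, p.eval t = (ContinuousLinearMap.id ℝ E + t • M).det := by
  classical
  let b := Module.finBasis ℝ E
  let A := LinearMap.toMatrix b b (M : E →ₗ[ℝ] E)
  refine ⟨((Polynomial.X : Polynomial ℝ) • A.map Polynomial.C
    + (1 : Matrix _ _ ℝ).map Polynomial.C).det, ?_, ?_⟩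
  · simpa using Polynomial.natDegree_det_X_add_C_le A 1
  · intro t
    have h1 : (ContinuousLinearMap.id ℝ E + t • M).det
        = (LinearMap.toMatrix b b ((ContinuousLinearMap.id ℝ E + t • M : E →L[ℝ] E) : E →ₗ[ℝ] E)).det := by
      rw [LinearMap.det_toMatrix]
    rw [h1, ← Polynomial.coe_evalRingHom, RingHom.map_det]
    congr 1
    have h2 : ((ContinuousLinearMap.id ℝ E + t • M : E →L[ℝ] E) : E →ₗ[ℝ] E)
      = LinearMap.id + t • (M : E →ₗ[ℝ] E) := by ext; simp
    have h3 : LinearMap.toMatrix b b (LinearMap.id + t • (M : E →ₗ[ℝ] E)) = 1 + t • A := by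
      rw [map_add, map_smul, LinearMap.toMatrix_id]
    rw [h2, h3]
    ext i j
    simp [Matrix.one_apply]
    split_ifs <;> simp <;> ring

lemma nsq_interp (D : ℕ) (δ : ℝ) (hδ : 0 < δ) : ∃ (w : ℕ → ℝ) (s : ℕ → ℝ),
    (∀ i ∈ Finset.range (D+1), 0 ≤ s i ∧ s i < δ) ∧ (∑ i ∈ Finset.range (D+1), w i = 1) ∧
    ∀ p : Polynomial ℝ, p.natDegree ≤ D → p.eval 1 = ∑ i ∈ Finset.range (D+1), w i * p.eval (s i) := by
  set s : ℕ → ℝ := fun i => δ * i / (D+1) with hs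
  have hinj : Set.InjOn s (Finset.range (D+1)) := by
    intro i _ j _ h
    simp only [hs] at h
    have h2 : (D+1:ℝ) ≠ 0 := by positivity
    field_simp at h
    exact_mod_cast h
  refine ⟨fun i => (Lagrange.basis (Finset.range (D+1)) s i).eval 1, s, ?_, ?_, ?_⟩
  · intro i hi
    have : (i:ℝ) < D+1 := by exact_mod_cast Finset.mem_range.1 hi
    constructor
    · simp only [hs]; positivity
    · simp only [hs]; rw [div_lt_iff₀ (by positivity)]; gcongr
  · rw [← Polynomial.eval_finsetSum, Lagrange.sum_basis hinj (by simp)]; simp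
  · intro p hp
    have hd : p.degree < (Finset.range (D+1)).card := by
      rw [Finset.card_range]
      exact lt_of_le_of_lt Polynomial.degree_le_natDegree (by exact_mod_cast Nat.lt_succ_of_le hp)
    conv_lhs => rw [Lagrange.eq_interpolate hinj hd]
    rw [Lagrange.interpolate_apply, Polynomial.eval_finsetSum]
    refine Finset.sum_congr rfl fun i _ => ?_
    simp [mul_comm]

end NsqPartB1

section NsqPartB2
open MeasureTheory

/-- change of variables for small `t` -/
lemma nsq_cov {E : Type*} [NormedAddCommGroup E] [InnerProductSpace ℝ E]
    [FiniteDimensional ℝ E] [MeasurableSpace E] [BorelSpace E] (u : E → E) (hu : ContDiff ℝ 1 u)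
    (R : ℝ) (hR : ∀ x, R < ‖x‖ → u x = 0) (L : NNReal) (hL : LipschitzWith L u) (t : ℝ) (ht : 0 ≤ t)
    (htL : t * L < 1) (Q : E → ℝ) :
    ∫ x in closedBall (0:E) R, (ContinuousLinearMap.id ℝ E + t • fderiv ℝ u x).det * Q (x + t • u x)
      = ∫ x in closedBall (0:E) R, Q x := by
  have hinj : Function.Injective (fun x => x + t • u x) := by
    intro x y h
    simp only at h
    have h1 : x - y = t • (u y - u x) := by
      rw [smul_sub, sub_eq_sub_iff_add_eq_add, h, add_comm]
    by_contra hne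
    have hpos : 0 < ‖x - y‖ := norm_pos_iff.2 (sub_ne_zero.2 hne)
    have h2 : ‖x - y‖ ≤ t * (L * ‖x - y‖) := by
      conv_lhs => rw [h1, norm_smul, Real.norm_of_nonneg ht]
      have := hL.norm_sub_le y x
      rw [norm_sub_rev y x] at this
      gcongr
    nlinarith
  have himg : (fun x => x + t • u x) '' closedBall (0:E) R = closedBall (0:E) R := by
    apply Subset.antisymm
    · rintro _ ⟨x, hx, rfl⟩
      by_contra hn
      simp only [mem_closedBall, dist_zero_right, not_le] at hn hx
      have h0 := hR _ hn
      have : x + t • u x = x := by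
        apply hinj
        simp only
        rw [h0]; simp
      rw [this] at hn; linarith
    · intro y hy
      have hc : ContractingWith (t.toNNReal * L : NNReal) (fun x => y - t • u x) := by
        refine ⟨by rw [← NNReal.coe_lt_coe]; simpa [ht] using htL, ?_⟩
        refine LipschitzWith.of_dist_le_mul fun a b => ?_
        rw [dist_eq_norm, dist_eq_norm]
        have : y - t • u a - (y - t • u b) = t • (u b - u a) := by rw [smul_sub]; abel
        rw [this, norm_smul, Real.norm_of_nonneg ht]
        have h3 := hL.norm_sub_le b a
        rw [norm_sub_rev b a] at h3
        calc t * ‖u b - u a‖ ≤ t * (L * ‖a - b‖) := by gcongr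
          _ = _ := by simp [mul_assoc, ht]
      have hfix := hc.fixedPoint_isFixedPt
      set x := hc.fixedPoint
      have hx : x + t • u x = y := by
        have : y - t • u x = x := hfix
        exact (sub_eq_iff_eq_add.1 this).symm
      refine ⟨x, ?_, hx⟩
      by_contra hn
      simp only [mem_closedBall, dist_zero_right, not_le] at hn hy
      rw [hR x hn] at hx
      simp at hx; rw [hx] at hn; linarith
  have hd : ∀ x, HasFDerivAt (fun x => x + t • u x)
      (ContinuousLinearMap.id ℝ E + t • fderiv ℝ u x) x := by
    intro x
    exact (hasFDerivAt_id x).add (((hu.differentiable (by norm_num)) x).hasFDerivAt.const_smul t)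
  have hpos : ∀ x, 0 < (ContinuousLinearMap.id ℝ E + t • fderiv ℝ u x).det := by
    intro x
    obtain ⟨p, -, hp⟩ := nsq_det_poly (fderiv ℝ u x)
    have hne : ∀ s ∈ Icc 0 t, p.eval s ≠ 0 := by
      intro s hs
      rw [hp s]
      intro h0
      have hk := LinearMap.bot_lt_ker_of_det_eq_zero
        (f := ((ContinuousLinearMap.id ℝ E + s • fderiv ℝ u x : E →L[ℝ] E) : E →ₗ[ℝ] E)) h0
      obtain ⟨v, hv, hv0⟩ := (Submodule.ne_bot_iff _).1 hk.ne'
      have hv' : v + s • fderiv ℝ u x v = 0 := by simpa using hv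
      have h1 : ‖v‖ = s * ‖fderiv ℝ u x v‖ := by
        rw [eq_neg_of_add_eq_zero_left hv', norm_neg, norm_smul, Real.norm_of_nonneg hs.1]
        rw [← eq_neg_of_add_eq_zero_left hv']
      have h2 : ‖fderiv ℝ u x v‖ ≤ L * ‖v‖ :=
        (ContinuousLinearMap.le_opNorm _ _).trans
          (by gcongr; exact norm_fderiv_le_of_lipschitz ℝ hL)
      have h3 : 0 < ‖v‖ := norm_pos_iff.2 hv0
      have h4 : s * ‖fderiv ℝ u x v‖ ≤ t * (L * ‖v‖) := by
        have := hs.2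
        gcongr
      nlinarith
    have h1 : p.eval 0 = 1 := by
      rw [hp]; simp only [zero_smul, add_zero]; exact LinearMap.det_id
    rw [← hp]
    by_contra hn
    push Not at hn
    have := intermediate_value_Icc' ht (f := fun s => p.eval s) (by fun_prop)
    obtain ⟨s, hs, hs0⟩ := this ⟨hn, by rw [h1]; norm_num⟩
    exact hne s hs hs0
  have := integral_image_eq_integral_abs_det_fderiv_smul volume
    (isClosed_closedBall (x := (0:E)) (ε := R)).measurableSet
    (fun x _ => (hd x).hasFDerivWithinAt) hinj.injOn Q
  rw [himg] at this
  rw [this]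
  simp only [abs_of_pos (hpos _), smul_eq_mul]

lemma nsq_cov_one {E : Type*} [NormedAddCommGroup E] [InnerProductSpace ℝ E]
    [FiniteDimensional ℝ E] [MeasurableSpace E] [BorelSpace E] (u : E → E) (hu : ContDiff ℝ 1 u)
    (R : ℝ) (hR : ∀ x, R < ‖x‖ → u x = 0) (L : NNReal) (hL : LipschitzWith L u)
    (C : ℝ) (m : ℕ) :
    ∫ x in closedBall (0:E) R, (ContinuousLinearMap.id ℝ E + fderiv ℝ u x).det
        * (C - ‖x + u x‖^2)^m
      = ∫ x in closedBall (0:E) R, (C - ‖x‖^2)^m := by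
  obtain ⟨w, s, hs, hw, hp⟩ := nsq_interp (Module.finrank ℝ E + 2 * m) (1/(L+1)) (by positivity)
  set F : ℝ → E → ℝ := fun t x => (ContinuousLinearMap.id ℝ E + t • fderiv ℝ u x).det
        * (C - ‖x + t • u x‖^2)^m with hF
  have hpoint : ∀ x, F 1 x = ∑ i ∈ Finset.range (Module.finrank ℝ E + 2*m+1), w i * F (s i) x := by
    intro x
    obtain ⟨p, hpd, hpe⟩ := nsq_det_poly (fderiv ℝ u x)
    set q : Polynomial ℝ := p * (Polynomial.C (C - ‖x‖^2) - Polynomial.C (2 * inner ℝ x (u x)) * Polynomial.X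
      - Polynomial.C (‖u x‖^2) * Polynomial.X^2)^m with hq
    have hqe : ∀ t, q.eval t = F t x := by
      intro t
      simp only [hq, hF, Polynomial.eval_mul, hpe, Polynomial.eval_pow, Polynomial.eval_sub,
        Polynomial.eval_C, Polynomial.eval_X]
      congr 2
      rw [norm_add_sq_real, inner_smul_right, norm_smul, mul_pow, Real.norm_eq_abs, sq_abs]
      ring
    rw [← hqe, hp q]
    · simp only [hqe]
    · refine Polynomial.natDegree_mul_le.trans (add_le_add hpd ?_)
      refine Polynomial.natDegree_pow_le.trans ?_
      rw [mul_comm]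
      gcongr
      compute_degree
  have hcont : ∀ t, Continuous (F t) := by
    intro t
    have h1 : Continuous (fun x => fderiv ℝ u x) := hu.continuous_fderiv (by norm_num)
    have h2 : Continuous u := hu.continuous
    have h3 : Continuous (fun x => (ContinuousLinearMap.id ℝ E + t • fderiv ℝ u x).det) :=
      ContinuousLinearMap.continuous_det.comp (by fun_prop)
    simp only [hF]
    fun_prop
  have hint : ∀ t, IntegrableOn (F t) (closedBall (0:E) R) := fun t =>
    (hcont t).continuousOn.integrableOn_compact (isCompact_closedBall 0 R)
  have h1 : ∫ x in closedBall (0:E) R, F 1 x = ∫ x in closedBall (0:E) R, (C - ‖x‖^2)^m := by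
    simp only [hpoint]
    rw [integral_finsetSum _ (fun i _ => (hint (s i)).const_mul (w i))]
    simp only [integral_const_mul]
    have : ∀ i ∈ Finset.range (Module.finrank ℝ E + 2*m+1),
        w i * ∫ x in closedBall (0:E) R, F (s i) x
        = w i * ∫ x in closedBall (0:E) R, (C - ‖x‖^2)^m := by
      intro i hi
      congr 1
      refine nsq_cov u hu R hR L hL (s i) (hs i hi).1 ?_ (fun y => (C - ‖y‖^2)^m)
      have h5 := (hs i hi).2
      rw [lt_div_iff₀ (by positivity)] at h5
      nlinarith [(hs i hi).1]
    rw [Finset.sum_congr rfl this, ← Finset.sum_mul, hw, one_mul]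
  simpa [hF] using h1

lemma nsq_zero_smooth {E : Type*} [NormedAddCommGroup E] [InnerProductSpace ℝ E]
    [FiniteDimensional ℝ E] (u : E → E) (hu : ContDiff ℝ 1 u)
    (hc : HasCompactSupport u) : ∃ x, x + u x = 0 := by
  borelize E
  by_contra hno
  push Not at hno
  obtain ⟨L, hL⟩ := hu.lipschitzWith_of_hasCompactSupport hc (by norm_num)
  obtain ⟨R, hRpos, hRs⟩ : ∃ R : ℝ, 0 < R ∧ tsupport u ⊆ closedBall 0 R := by
    obtain ⟨R, hR⟩ := hc.isBounded.subset_closedBall (0:E)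
    exact ⟨max R 1, by positivity, hR.trans (closedBall_subset_closedBall (le_max_left _ _))⟩
  have hR : ∀ x, R < ‖x‖ → u x = 0 := by
    intro x hx
    apply image_eq_zero_of_notMem_tsupport
    intro h
    have := hRs h
    simp at this; linarith
  have hucont := hu.continuous
  have hB := isCompact_closedBall (0:E) R
  have hBne : (closedBall (0:E) R).Nonempty := ⟨0, by simp [hRpos.le]⟩
  obtain ⟨x0, hx0, hmin⟩ := hB.exists_isMinOn hBne (f := fun x => ‖x + u x‖) (by fun_prop)
  obtain ⟨x1, hx1, hmax⟩ := hB.exists_isMaxOn hBne (f := fun x => ‖x + u x‖) (by fun_prop)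
  have hdc : Continuous (fun x => (ContinuousLinearMap.id ℝ E + fderiv ℝ u x).det) :=
    ContinuousLinearMap.continuous_det.comp
      (continuous_const.add (hu.continuous_fderiv (by norm_num)))
  obtain ⟨x2, hx2, hmax2⟩ := hB.exists_isMaxOn hBne
    (f := fun x => |(ContinuousLinearMap.id ℝ E + fderiv ℝ u x).det|) (hdc.abs.continuousOn)
  set η := min ‖x0 + u x0‖ R with hη
  have hηpos : 0 < η := lt_min (norm_pos_iff.2 (hno x0)) hRpos
  set C := ‖x1 + u x1‖^2 + R^2 + η^2 with hC
  set D := |(ContinuousLinearMap.id ℝ E + fderiv ℝ u x2).det| with hD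
  set vB := (volume (closedBall (0:E) R)).toReal
  set vb := (volume (closedBall (0:E) (η/2))).toReal
  have hvb : 0 < vb := ENNReal.toReal_pos
    (measure_closedBall_pos _ _ (by positivity)).ne' (measure_closedBall_lt_top).ne
  have key : ∀ m : ℕ, vb * (C - η^2/4)^m ≤ D * vB * (C - η^2)^m := by
    intro m
    have h := nsq_cov_one u hu R hR L hL C m
    have hup : ∫ x in closedBall (0:E) R, (ContinuousLinearMap.id ℝ E + fderiv ℝ u x).det
        * (C - ‖x + u x‖^2)^m ≤ D * vB * (C - η^2)^m := by
      refine (le_abs_self _).trans ?_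
      rw [← Real.norm_eq_abs]
      refine (norm_setIntegral_le_of_norm_le_const (C := D * (C - η^2)^m) hB.measure_lt_top ?_).trans
        (le_of_eq ?_)
      · intro x hx
        rw [norm_mul, Real.norm_eq_abs, Real.norm_eq_abs]
        have h1 : η ≤ ‖x + u x‖ := (min_le_left _ _).trans (hmin hx)
        have h2 : ‖x + u x‖ ≤ ‖x1 + u x1‖ := hmax hx
        have h3 : ‖x + u x‖^2 ≤ ‖x1 + u x1‖^2 := by gcongr
        have h4 : η^2 ≤ ‖x + u x‖^2 := by gcongr
        have h5 : 0 ≤ C - ‖x + u x‖^2 := by rw [hC]; nlinarith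
        rw [abs_of_nonneg (pow_nonneg h5 m)]
        have h6 := hmax2 hx
        gcongr
        exact h6
      · simp only [Measure.real]; ring
    have hlow : vb * (C - η^2/4)^m ≤ ∫ x in closedBall (0:E) R, (C - ‖x‖^2)^m := by
      have hcont : Continuous (fun x : E => (C - ‖x‖^2)^m) := by fun_prop
      have hsub : closedBall (0:E) (η/2) ⊆ closedBall (0:E) R :=
        closedBall_subset_closedBall (by linarith [min_le_right ‖x0 + u x0‖ R])
      have h1 : ∫ x in closedBall (0:E) (η/2), (C - ‖x‖^2)^m
          ≤ ∫ x in closedBall (0:E) R, (C - ‖x‖^2)^m := by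
        refine setIntegral_mono_set (hcont.continuousOn.integrableOn_compact hB) ?_
          (Filter.Eventually.of_forall hsub)
        refine (ae_restrict_iff' isClosed_closedBall.measurableSet).2
          (Filter.Eventually.of_forall fun x hx => ?_)
        simp only [mem_closedBall, dist_zero_right] at hx
        have : ‖x‖^2 ≤ R^2 := by gcongr
        exact pow_nonneg (by rw [hC]; nlinarith [sq_nonneg ‖x1 + u x1‖]) m
      refine le_trans ?_ h1
      have h2 : ∫ x in closedBall (0:E) (η/2), (C - η^2/4)^m = vb * (C - η^2/4)^m := by
        rw [setIntegral_const]; rfl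
      rw [← h2]
      refine setIntegral_mono_on (by simp [measure_closedBall_lt_top])
        (hcont.continuousOn.integrableOn_compact (isCompact_closedBall _ _))
        isClosed_closedBall.measurableSet ?_
      intro x hx
      simp only [mem_closedBall, dist_zero_right] at hx
      have h3 : ‖x‖^2 ≤ (η/2)^2 := by gcongr
      have : 0 ≤ C - η^2/4 := by rw [hC]; nlinarith [sq_nonneg ‖x1 + u x1‖]
      gcongr
      nlinarith
    linarith
  have hC1 : 0 < C - η^2/4 := by rw [hC]; nlinarith [sq_nonneg ‖x1 + u x1‖]
  have hC2 : 0 ≤ C - η^2 := by rw [hC]; nlinarith [sq_nonneg ‖x1 + u x1‖]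
  have hlim : Filter.Tendsto (fun m : ℕ => D * vB * ((C - η^2)/(C-η^2/4))^m) Filter.atTop
      (nhds (D * vB * 0)) := by
    refine (tendsto_pow_atTop_nhds_zero_of_lt_one (by positivity) ?_).const_mul _
    rw [div_lt_one hC1]; nlinarith
  have hle : vb ≤ D * vB * 0 := by
    refine ge_of_tendsto' hlim fun m => ?_
    rw [div_pow, ← mul_div_assoc, le_div_iff₀ (by positivity)]
    exact key m
  linarith

/-- Brouwer: a continuous compactly supported perturbation of the identity has a zero. -/
lemma nsq_zero {E : Type*} [NormedAddCommGroup E] [NormedSpace ℝ E]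
    [FiniteDimensional ℝ E] (u : E → E) (hu : Continuous u)
    (hc : HasCompactSupport u) : ∃ x, x + u x = 0 := by
  -- Euclidean case
  have main : ∀ v : EuclideanSpace ℝ (Fin (Module.finrank ℝ E)) →
      EuclideanSpace ℝ (Fin (Module.finrank ℝ E)), Continuous v → HasCompactSupport v →
      ∃ x, x + v x = 0 := by
    intro v hv hvc
    by_contra hno
    push Not at hno
    obtain ⟨R, hR⟩ := hvc.isBounded.subset_closedBall 0
    have hB := isCompact_closedBall (0:EuclideanSpace ℝ (Fin (Module.finrank ℝ E))) (max R 1)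
    obtain ⟨x0, hx0, hmin⟩ := hB.exists_isMinOn ⟨0, by simp⟩ (f := fun x => ‖x + v x‖) (by fun_prop)
    have hpos : 0 < min ‖x0 + v x0‖ 1 := lt_min (norm_pos_iff.2 (hno x0)) one_pos
    obtain ⟨g, hg, hgd, hgs⟩ := hv.exists_contDiff_approx 1 (ε := fun _ => min ‖x0 + v x0‖ 1)
      continuous_const (fun _ => hpos)
    obtain ⟨x, hx⟩ := nsq_zero_smooth g (by simpa using hg) (hvc.mono hgs)
    have hd := hgd x
    have h1 : dist (g x) (v x) = ‖x + v x‖ := by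
      rw [dist_comm, dist_eq_norm, eq_neg_of_add_eq_zero_right hx, sub_neg_eq_add, add_comm]
    rw [h1] at hd
    by_cases hxB : x ∈ closedBall 0 (max R 1)
    · have h2 : ‖x0 + v x0‖ ≤ ‖x + v x‖ := hmin hxB
      have := min_le_left ‖x0 + v x0‖ 1
      linarith
    · have h3 : v x = 0 := by
        apply image_eq_zero_of_notMem_tsupport
        intro h
        exact hxB (closedBall_subset_closedBall (le_max_left _ _) (hR h))
      simp only [mem_closedBall, dist_zero_right, not_le] at hxB
      rw [h3, add_zero] at hd
      have h4 := (le_max_right R 1)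
      have h5 := min_le_right ‖x0 + v x0‖ 1
      linarith
  let e : E ≃L[ℝ] EuclideanSpace ℝ (Fin (Module.finrank ℝ E)) := toEuclidean
  obtain ⟨x, hx⟩ := main (fun x => e (u (e.symm x))) (by fun_prop) (by
    have h1 : HasCompactSupport (u ∘ e.symm) := hc.comp_homeomorph e.symm.toHomeomorph
    exact h1.comp_left (g := e) (by simp))
  refine ⟨e.symm x, ?_⟩
  apply e.injective
  simpa using hx

/-- degree-type continuation lemma -/
lemma nsq_link {X : Type*} [NormedAddCommGroup X] [NormedSpace ℝ X] [FiniteDimensional ℝ X]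
    (K : Set X) (hK : IsCompact K) (p : X) (hp : p ∈ K) (T : ℝ → X → X)
    (hT : Continuous (fun q : ℝ × X => T q.1 q.2))
    (h0 : ∀ x ∈ K, T 0 x = x - p)
    (hb : ∀ x ∈ frontier K, ∀ s ∈ Icc (0:ℝ) 1, T s x ≠ 0) : ∃ x ∈ K, T 1 x = 0 := by
  classical
  set Z : Set X := {x | x ∈ K ∧ ∃ s ∈ Icc (0:ℝ) 1, T s x = 0} with hZ
  have hZc : IsClosed Z := by
    have h1 : IsCompact ((Icc (0:ℝ) 1 ×ˢ K) ∩ {q | T q.1 q.2 = 0}) :=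
      (isCompact_Icc.prod hK).inter_right (isClosed_singleton.preimage hT)
    have h2 : Z = Prod.snd '' ((Icc (0:ℝ) 1 ×ˢ K) ∩ {q | T q.1 q.2 = 0}) := by
      ext x
      constructor
      · rintro ⟨hx, s, hs, h⟩
        exact ⟨(s, x), ⟨⟨hs, hx⟩, h⟩, rfl⟩
      · rintro ⟨⟨s, y⟩, ⟨⟨hs, hx⟩, h⟩, rfl⟩
        exact ⟨hx, s, hs, h⟩
    rw [h2]
    exact (h1.image continuous_snd).isClosed
  have hdisj : Disjoint (frontier K) Z := by
    rw [Set.disjoint_left]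
    rintro x hx ⟨_, s, hs, h⟩
    exact hb x hx s hs h
  obtain ⟨f, hf0, hf1, hf⟩ := exists_continuous_zero_one_of_isClosed isClosed_frontier hZc hdisj
  set u : X → X := fun x => if x ∈ K then T (f x) x - x + p else 0 with hu
  have hucont : Continuous u := by
    refine Continuous.if ?_ ?_ continuous_const
    · intro x hx
      have h1 : f x = 0 := hf0 hx
      have hxK : x ∈ K := by
        have : x ∈ closure K := frontier_subset_closure hx
        rwa [hK.isClosed.closure_eq] at this
      change T (f x) x - x + p = 0
      rw [h1, h0 x hxK]; abel
    · have : Continuous fun x => T (f x) x := hT.comp (f.continuous.prodMk continuous_id)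
      exact (this.sub continuous_id).add continuous_const
  have hus : HasCompactSupport u := by
    refine HasCompactSupport.of_support_subset_isCompact hK fun x hx => ?_
    by_contra hn
    exact hx (by simp [hu, hn])
  obtain ⟨y, hy⟩ := nsq_zero (fun y => u (y + p)) (by fun_prop)
    (hus.comp_homeomorph (Homeomorph.addRight p))
  by_cases hyK : y + p ∈ K
  · have h1 : T (f (y + p)) (y + p) = 0 := by
      simp only [hu, hyK, if_true] at hy
      rw [← hy]; abel
    have h2 : y + p ∈ Z := ⟨hyK, f (y+p), hf _, h1⟩
    have h3 : f (y + p) = 1 := hf1 h2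
    rw [h3] at h1
    exact ⟨y + p, hyK, h1⟩
  · simp only [hu, hyK, if_false, add_zero] at hy
    rw [hy, zero_add] at hyK
    exact absurd hp hyK

end NsqPartB2

section NsqPartA1
open MeasureTheory

noncomputable section NsqA1

set_option linter.unusedSectionVars false

variable {V : Type*} [NormedAddCommGroup V] [InnerProductSpace ℝ V] [FiniteDimensional ℝ V]

/-- rotation `exp(θ J)` -/
def nsqRot (J : V →L[ℝ] V) (θ : ℝ) (v : V) : V := Real.cos θ • v + Real.sin θ • J v

lemma nsqRot_cont (J : V →L[ℝ] V) : Continuous (fun q : ℝ × V => nsqRot J q.1 q.2) := by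
  unfold nsqRot; fun_prop

lemma nsqRot_cont' (J : V →L[ℝ] V) {X : Type*} [TopologicalSpace X] {f : X → ℝ} {g : X → V}
    (hf : Continuous f) (hg : Continuous g) : Continuous (fun x => nsqRot J (f x) (g x)) :=
  (nsqRot_cont J).comp (hf.prodMk hg)

lemma nsqRot_add_vec (J : V →L[ℝ] V) (θ : ℝ) (v w : V) :
    nsqRot J θ (v + w) = nsqRot J θ v + nsqRot J θ w := by
  simp only [nsqRot, map_add, smul_add]; abel

lemma nsqRot_sub_vec (J : V →L[ℝ] V) (θ : ℝ) (v w : V) :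
    nsqRot J θ (v - w) = nsqRot J θ v - nsqRot J θ w := by
  simp only [nsqRot, map_sub, smul_sub]; abel

lemma nsqRot_zero (J : V →L[ℝ] V) (v : V) : nsqRot J 0 v = v := by simp [nsqRot]

lemma nsqRot_zero_vec (J : V →L[ℝ] V) (θ : ℝ) : nsqRot J θ 0 = 0 := by simp [nsqRot]

lemma nsqRot_inner (J : V →L[ℝ] V) (hs : ∀ x y, inner ℝ (J x) y = - inner ℝ x (J y))
    (θ : ℝ) (v w : V) : inner ℝ (nsqRot J θ v) w = inner ℝ v (nsqRot J (-θ) w) := by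
  simp only [nsqRot, inner_add_left, inner_add_right, inner_smul_left, inner_smul_right, hs,
    Real.cos_neg, Real.sin_neg]
  simp

lemma nsqRot_rot (J : V →L[ℝ] V) (h2 : ∀ x, J (J x) = -x) (θ τ : ℝ) (v : V) :
    nsqRot J θ (nsqRot J τ v) = nsqRot J (θ + τ) v := by
  simp only [nsqRot, map_add, map_smul, h2, Real.cos_add, Real.sin_add]
  module

lemma nsqRot_norm (J : V →L[ℝ] V) (h2 : ∀ x, J (J x) = -x)
    (hs : ∀ x y, inner ℝ (J x) y = - inner ℝ x (J y)) (θ : ℝ) (v : V) :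
    ‖nsqRot J θ v‖ = ‖v‖ := by
  have : ‖nsqRot J θ v‖^2 = ‖v‖^2 := by
    rw [← real_inner_self_eq_norm_sq, nsqRot_inner J hs, nsqRot_rot J h2, neg_add_cancel,
      nsqRot_zero, real_inner_self_eq_norm_sq]
  exact (sq_eq_sq₀ (norm_nonneg _) (norm_nonneg _)).1 this

lemma nsqRot_hasDerivAt (J : V →L[ℝ] V) (h2 : ∀ x, J (J x) = -x) (a t : ℝ) (v : V) :
    HasDerivAt (fun t => nsqRot J (a * t) v) (a • J (nsqRot J (a * t) v)) t := by
  have h1 : HasDerivAt (fun t : ℝ => a * t) a t := by simpa using (hasDerivAt_id t).const_mul a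
  have := (h1.cos.smul_const v).add (h1.sin.smul_const (J v))
  convert! this using 1
  simp only [nsqRot, map_add, map_smul, h2]
  module

lemma nsqRot_comm (J B : V →L[ℝ] V) (hB : ∀ x, B (J x) = J (B x)) (θ : ℝ) (v : V) :
    B (nsqRot J θ v) = nsqRot J θ (B v) := by
  simp [nsqRot, hB]

lemma nsqRot_int (J : V →L[ℝ] V) (k : ℤ) (v w : V) :
    ∫ t in (0:ℝ)..1, inner ℝ (nsqRot J (2 * Real.pi * k * t) v) w
      = if k = 0 then inner ℝ v w else 0 := by
  split_ifs with h
  · simp [h, nsqRot]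
  · have hk : 2 * Real.pi * (k:ℝ) ≠ 0 := by
      have : (k:ℝ) ≠ 0 := by exact_mod_cast h
      positivity
    have e : ∀ t : ℝ, inner ℝ (nsqRot J (2 * Real.pi * k * t) v) w
      = Real.cos (2 * Real.pi * k * t) * inner ℝ v w + Real.sin (2 * Real.pi * k * t) * inner ℝ (J v) w := by
      intro t; simp [nsqRot, inner_add_left, inner_smul_left]
    simp only [e]
    rw [intervalIntegral.integral_add (by apply Continuous.intervalIntegrable; fun_prop)
      (by apply Continuous.intervalIntegrable; fun_prop)]
    rw [intervalIntegral.integral_mul_const, intervalIntegral.integral_mul_const,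
      intervalIntegral.integral_comp_mul_left (fun x => Real.cos x) hk,
      intervalIntegral.integral_comp_mul_left (fun x => Real.sin x) hk]
    have h3 : Real.sin (2 * Real.pi * k) = 0 := by
      have := Real.sin_int_mul_pi (2 * k)
      rw [← this]; congr 1; push_cast; ring
    have h4 : Real.cos (2 * Real.pi * k) = 1 := by
      rw [mul_comm]; exact Real.cos_int_mul_two_pi k
    simp [h3, h4]

/-- coefficient space -/
abbrev NsqF (V : Type*) [NormedAddCommGroup V] (I : Finset ℤ) := PiLp 2 (fun _ : I => V)

/-- finite Fourier synthesis -/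
def nsqS (J : V →L[ℝ] V) {I : Finset ℤ} (c : NsqF V I) (t : ℝ) : V :=
  ∑ k : I, nsqRot J (2 * Real.pi * (k:ℤ) * t) (c k)

/-- Fourier coefficients -/
def nsqCoef (J : V →L[ℝ] V) (f : ℝ → V) (k : ℤ) : V :=
  ∫ t in (0:ℝ)..1, nsqRot J (- (2 * Real.pi * k * t)) (f t)

lemma nsqS_cont (J : V →L[ℝ] V) {I : Finset ℤ} :
    Continuous (fun q : NsqF V I × ℝ => nsqS J q.1 q.2) := by
  unfold nsqS
  refine continuous_finsetSum _ fun k _ => nsqRot_cont' J (by fun_prop) (by fun_prop)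

lemma nsqS_cont_t (J : V →L[ℝ] V) {I : Finset ℤ} (c : NsqF V I) : Continuous (nsqS J c) := by
  unfold nsqS
  refine continuous_finsetSum _ fun k _ => nsqRot_cont' J (by fun_prop) continuous_const

lemma nsqS_add (J : V →L[ℝ] V) {I : Finset ℤ} (c d : NsqF V I) (t : ℝ) :
    nsqS J (c + d) t = nsqS J c t + nsqS J d t := by
  simp [nsqS, nsqRot_add_vec, Finset.sum_add_distrib]

lemma nsqS_sub (J : V →L[ℝ] V) {I : Finset ℤ} (c d : NsqF V I) (t : ℝ) :
    nsqS J (c - d) t = nsqS J c t - nsqS J d t := by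
  simp [nsqS, nsqRot_sub_vec, Finset.sum_sub_distrib]

lemma nsq_parseval (J : V →L[ℝ] V) (h2 : ∀ x, J (J x) = -x)
    (hs : ∀ x y, inner ℝ (J x) y = - inner ℝ x (J y)) (B : V →L[ℝ] V)
    (hB : ∀ x, B (J x) = J (B x)) {I : Finset ℤ} (c d : NsqF V I) :
    ∫ t in (0:ℝ)..1, inner ℝ (B (nsqS J c t)) (nsqS J d t) = ∑ k : I, inner ℝ (B (c k)) (d k) := by
  have e : ∀ t : ℝ, inner ℝ (B (nsqS J c t)) (nsqS J d t)
      = ∑ k : I, ∑ l : I, inner ℝ (nsqRot J (2 * Real.pi * ((k:ℤ) - (l:ℤ) : ℤ) * t) (B (c k))) (d l) := by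
    intro t
    simp only [nsqS, map_sum, sum_inner, inner_sum]
    rw [Finset.sum_comm]
    refine Finset.sum_congr rfl fun k _ => Finset.sum_congr rfl fun l _ => ?_
    rw [nsqRot_comm J B hB, real_inner_comm, nsqRot_inner J hs, nsqRot_rot J h2, real_inner_comm]
    have ee : -(2 * Real.pi * ((l:ℤ):ℝ) * t) + 2 * Real.pi * ((k:ℤ):ℝ) * t
      = 2 * Real.pi * (((k:ℤ) - (l:ℤ) : ℤ) : ℝ) * t := by push_cast; ring
    rw [ee]
  simp only [e]
  have hci : ∀ (k l : I), Continuous fun t : ℝ =>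
      (inner ℝ (nsqRot J (2 * Real.pi * ((k:ℤ) - (l:ℤ) : ℤ) * t) (B (c k))) (d l) : ℝ) := by
    intro k l
    exact (nsqRot_cont' J (by fun_prop) continuous_const).inner continuous_const
  rw [intervalIntegral.integral_finsetSum
    (fun k _ => (continuous_finsetSum _ fun l _ => hci k l).intervalIntegrable _ _)]
  refine Finset.sum_congr rfl fun k _ => ?_
  rw [intervalIntegral.integral_finsetSum (fun l _ => (hci k l).intervalIntegrable _ _)]
  simp only [nsqRot_int]
  have : ∀ l : I, ((k:ℤ) - (l:ℤ) = 0) ↔ k = l := by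
    intro l; rw [sub_eq_zero, Subtype.ext_iff]
  simp [this]

lemma nsq_parseval_norm (J : V →L[ℝ] V) (h2 : ∀ x, J (J x) = -x)
    (hs : ∀ x y, inner ℝ (J x) y = - inner ℝ x (J y)) {I : Finset ℤ} (c : NsqF V I) :
    ∫ t in (0:ℝ)..1, ‖nsqS J c t‖^2 = ‖c‖^2 := by
  have := nsq_parseval J h2 hs (ContinuousLinearMap.id ℝ V) (fun _ => rfl) c c
  simp only [ContinuousLinearMap.id_apply, real_inner_self_eq_norm_sq] at this
  rw [this, PiLp.norm_sq_eq_of_L2]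

lemma nsq_coef_adj (J : V →L[ℝ] V) 
    (hs : ∀ x y, inner ℝ (J x) y = - inner ℝ x (J y)) (f : ℝ → V) (hf : Continuous f)
    {I : Finset ℤ} (d : NsqF V I) :
    ∫ t in (0:ℝ)..1, inner ℝ (f t) (nsqS J d t) = ∑ k : I, inner ℝ (nsqCoef J f k) (d k) := by
  have hc : ∀ k : I, Continuous fun t : ℝ => nsqRot J (-(2 * Real.pi * (k:ℤ) * t)) (f t) :=
    fun k => nsqRot_cont' J (by fun_prop) hf
  have e : ∀ t : ℝ, inner ℝ (f t) (nsqS J d t)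
      = ∑ k : I, inner ℝ (d k) (nsqRot J (-(2 * Real.pi * (k:ℤ) * t)) (f t)) := by
    intro t
    simp only [nsqS, inner_sum]
    refine Finset.sum_congr rfl fun k _ => ?_
    rw [real_inner_comm, nsqRot_inner J hs]
  simp only [e]
  rw [intervalIntegral.integral_finsetSum
    (fun k _ => (continuous_const.inner (hc k)).intervalIntegrable _ _)]
  refine Finset.sum_congr rfl fun k _ => ?_
  rw [real_inner_comm, nsqCoef]
  exact (innerSL ℝ (d k)).intervalIntegral_comp_comm ((hc k).intervalIntegrable _ _)

/-- Bessel -/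
lemma nsq_bessel (J : V →L[ℝ] V) (h2 : ∀ x, J (J x) = -x)
    (hs : ∀ x y, inner ℝ (J x) y = - inner ℝ x (J y)) (f : ℝ → V) (hf : Continuous f)
    (I : Finset ℤ) : ∑ k : I, ‖nsqCoef J f k‖^2 ≤ ∫ t in (0:ℝ)..1, ‖f t‖^2 := by
  set d : NsqF V I := WithLp.toLp 2 (fun k : I => nsqCoef J f k) with hd
  have h1 := nsq_coef_adj J hs f hf d
  have h3 := nsq_parseval_norm J h2 hs d
  rw [PiLp.norm_sq_eq_of_L2] at h3
  have h4 : ∑ k : I, inner ℝ (nsqCoef J f k) (d k) = ∑ k : I, ‖nsqCoef J f k‖^2 := by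
    simp [hd]
  have h5 : ∑ k : I, ‖d k‖^2 = ∑ k : I, ‖nsqCoef J f k‖^2 := rfl
  have hSc := nsqS_cont_t J d
  have h6 : ∫ t in (0:ℝ)..1, inner ℝ (f t) (nsqS J d t)
      ≤ ∫ t in (0:ℝ)..1, (1/2 * ‖f t‖^2 + 1/2 * ‖nsqS J d t‖^2) := by
    refine intervalIntegral.integral_mono_on zero_le_one
      ((hf.inner hSc).intervalIntegrable _ _) ?_ fun t _ => ?_
    · apply Continuous.intervalIntegrable; fun_prop
    · have := real_inner_le_norm (f t) (nsqS J d t)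
      nlinarith [sq_nonneg (‖f t‖ - ‖nsqS J d t‖)]
  rw [intervalIntegral.integral_add (by apply Continuous.intervalIntegrable; fun_prop)
    (by apply Continuous.intervalIntegrable; fun_prop), intervalIntegral.integral_const_mul,
    intervalIntegral.integral_const_mul, h1, h3, h4, h5] at h6
  linarith

end NsqA1

end NsqPartA1

section NsqPartA2
open MeasureTheory

noncomputable section NsqA2

set_option linter.unusedSectionVars false

/-- data for the variational problem -/
structure NsqData (V : Type*) [NormedAddCommGroup V] [InnerProductSpace ℝ V]
    [FiniteDimensional ℝ V] where
  J : V →L[ℝ] V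
  J_sq : ∀ x, J (J x) = -x
  J_skew : ∀ x y, inner ℝ (J x) y = - inner ℝ x (J y)
  A : V →L[ℝ] V
  A_symm : ∀ x y, inner ℝ (A x) y = inner ℝ x (A y)
  A_comm : ∀ x, A (J x) = J (A x)
  a0 : ℝ
  a0_pos : 0 < a0
  A_pos : ∀ x, a0 * ‖x‖^2 ≤ inner ℝ (A x) x
  e : V
  e_norm : ‖e‖ = 1
  a1 : ℝ
  A_e : A e = a1 • e
  a1_gt : 2 * Real.pi < a1
  γ : ℝ
  γ_pos : 0 < γ
  gap : ∀ (k : ℤ) (v : V), γ * (1 + |(k:ℝ)|) * ‖v‖ ≤ ‖(2 * Real.pi * (k:ℝ)) • v - A v‖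
  g : V → ℝ
  G : V → V
  grad : ∀ x, HasGradientAt g (G x) x
  M : ℝ
  g_bd : ∀ x, |g x| ≤ M
  G_bd : ∀ x, ‖G x‖ ≤ M
  L : NNReal
  G_lip : LipschitzWith L G
  H_nonneg : ∀ x, 0 ≤ 1/2 * inner ℝ (A x) x + g x
  c0 : V
  ρ : ℝ
  ρ_pos : 0 < ρ
  H_zero : ∀ z, ‖z‖ ≤ ρ → 1/2 * inner ℝ (A (c0 + z)) (c0 + z) + g (c0 + z) = 0
  Q : ℝ
  H_quad : ∀ z, 1/2 * inner ℝ (A (c0 + z)) (c0 + z) + g (c0 + z) ≤ Q * ‖z‖^2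

namespace NsqData

variable {V : Type*} [NormedAddCommGroup V] [InnerProductSpace ℝ V] [FiniteDimensional ℝ V]
variable (P : NsqData V)

/-- the Hamiltonian -/
def H (x : V) : ℝ := 1/2 * inner ℝ (P.A x) x + P.g x

/-- its gradient -/
def dH (x : V) : V := P.A x + P.G x

lemma G_cont : Continuous P.G := P.G_lip.continuous

lemma g_cont : Continuous P.g :=
  continuous_iff_continuousAt.2 fun x => (P.grad x).hasFDerivAt.continuousAt

lemma H_cont : Continuous P.H := by
  have := P.g_cont
  unfold H; fun_prop

lemma dH_cont : Continuous P.dH := by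
  have := P.G_cont
  unfold dH; fun_prop

lemma M_nonneg : 0 ≤ P.M := (norm_nonneg _).trans (P.G_bd 0)

lemma H_lower (x y : V) :
    P.H x + inner ℝ (P.dH x) y - P.L * ‖y‖^2 ≤ P.H (x + y) := by
  have hg : |P.g (x + y) - P.g x - inner ℝ (P.G x) y| ≤ P.L * ‖y‖ * ‖y‖ := by
    have := (convex_closedBall x ‖y‖).norm_image_sub_le_of_norm_hasFDerivWithin_le'
      (f := P.g) (f' := fun z => (InnerProductSpace.toDual ℝ V) (P.G z))
      (φ := (InnerProductSpace.toDual ℝ V) (P.G x)) (C := P.L * ‖y‖) (x := x) (y := x + y)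
      (fun z _ => (P.grad z).hasFDerivAt.hasFDerivWithinAt) ?_ (by simp) (by simp)
    · simpa using this
    · intro z hz
      rw [← map_sub, LinearIsometryEquiv.norm_map]
      refine (P.G_lip.norm_sub_le z x).trans ?_
      rw [mem_closedBall, dist_eq_norm] at hz
      gcongr
  have h1 := (abs_le.1 hg).1
  have h2 : 0 ≤ inner ℝ (P.A y) y := le_trans (by have := P.a0_pos; positivity) (P.A_pos y)
  have h3 := P.A_symm x y
  have h4 := P.A_symm y x
  simp only [H, dH, map_add, inner_add_left, inner_add_right]
  rw [real_inner_comm] at h4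
  rw [real_inner_comm] at h3
  nlinarith [real_inner_comm (P.A x) y, real_inner_comm (P.A y) x, real_inner_comm (P.G x) y]

variable {I : Finset ℤ}

/-- quadratic part -/
def q (c : NsqF V I) : ℝ := Real.pi * ∑ k : I, ((k:ℤ):ℝ) * ‖c k‖^2

/-- action functional -/
def Phi (c : NsqF V I) : ℝ := q c - ∫ t in (0:ℝ)..1, P.H (nsqS P.J c t)

/-- its gradient -/
def dPhi (c : NsqF V I) : NsqF V I := WithLp.toLp 2 fun k : I =>
  (2 * Real.pi * ((k:ℤ):ℝ)) • c k - nsqCoef P.J (fun t => P.dH (nsqS P.J c t)) k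

lemma dPhi_cont : Continuous (P.dPhi (I := I)) := by
  unfold dPhi
  refine (PiLp.continuous_toLp 2 _).comp (continuous_pi fun k => ?_)
  refine Continuous.sub (by fun_prop) ?_
  unfold nsqCoef
  apply intervalIntegral.continuous_parametric_intervalIntegral_of_continuous'
  refine nsqRot_cont' P.J (by fun_prop) ?_
  exact P.dH_cont.comp (nsqS_cont P.J)

lemma Phi_upper (Λ : ℝ) (hΛ : ∀ k ∈ I, Real.pi * (k:ℝ) + P.L ≤ Λ) (c d : NsqF V I) :
    P.Phi (c + d) ≤ P.Phi c + inner ℝ (P.dPhi c) d + Λ * ‖d‖^2 := by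
  have hc := nsqS_cont_t P.J c
  have hd := nsqS_cont_t P.J d
  have hH := P.H_cont
  have hdH := P.dH_cont
  have h1 : ∫ t in (0:ℝ)..1, (P.H (nsqS P.J c t) + inner ℝ (P.dH (nsqS P.J c t)) (nsqS P.J d t)
      - P.L * ‖nsqS P.J d t‖^2) ≤ ∫ t in (0:ℝ)..1, P.H (nsqS P.J (c+d) t) := by
    refine intervalIntegral.integral_mono_on zero_le_one ?_ ?_ fun t _ => ?_
    · apply Continuous.intervalIntegrable; fun_prop
    · exact (hH.comp (nsqS_cont_t P.J (c+d))).intervalIntegrable _ _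
    · rw [nsqS_add]; exact P.H_lower _ _
  rw [intervalIntegral.integral_sub (by apply Continuous.intervalIntegrable; fun_prop)
    (by apply Continuous.intervalIntegrable; fun_prop),
    intervalIntegral.integral_add (by apply Continuous.intervalIntegrable; fun_prop)
    (by apply Continuous.intervalIntegrable; fun_prop), intervalIntegral.integral_const_mul,
    nsq_parseval_norm P.J P.J_sq P.J_skew, 
    nsq_coef_adj P.J P.J_skew (fun t => P.dH (nsqS P.J c t)) (hdH.comp hc)] at h1
  have h2 : inner ℝ (P.dPhi c) d = ∑ k : I, (2 * Real.pi * ((k:ℤ):ℝ)) * inner ℝ (c k) (d k)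
      - ∑ k : I, inner ℝ (nsqCoef P.J (fun t => P.dH (nsqS P.J c t)) k) (d k) := by
    rw [PiLp.inner_apply, ← Finset.sum_sub_distrib]
    refine Finset.sum_congr rfl fun k _ => ?_
    simp [dPhi, inner_sub_left, inner_smul_left]
  have h3 : q (c + d) = q c + ∑ k : I, (2 * Real.pi * ((k:ℤ):ℝ)) * inner ℝ (c k) (d k) + q d := by
    simp only [q, Finset.mul_sum]
    rw [← Finset.sum_add_distrib, ← Finset.sum_add_distrib]
    refine Finset.sum_congr rfl fun k _ => ?_
    rw [PiLp.add_apply, norm_add_sq_real]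
    ring
  have h4 : q d + P.L * ‖d‖^2 ≤ Λ * ‖d‖^2 := by
    rw [PiLp.norm_sq_eq_of_L2, q, Finset.mul_sum, Finset.mul_sum, Finset.mul_sum,
      ← Finset.sum_add_distrib]
    refine Finset.sum_le_sum fun k _ => ?_
    have := hΛ k k.2
    have h5 : 0 ≤ ‖d k‖^2 := by positivity
    nlinarith
  unfold Phi
  linarith

/-- one gradient step -/
def step (h s : ℝ) (c : NsqF V I) : NsqF V I := c - (s * h) • P.dPhi c

lemma step_cont (h : ℝ) : Continuous (fun r : ℝ × NsqF V I => P.step h r.1 r.2) := by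
  have := P.dPhi_cont (I := I)
  unfold step; fun_prop

lemma iter_cont (h : ℝ) (m : ℕ) :
    Continuous (fun r : ℝ × NsqF V I => (P.step h r.1)^[m] r.2) := by
  induction m with
  | zero => exact continuous_snd
  | succ m ih =>
    simp only [Function.iterate_succ_apply']
    exact (P.step_cont h).comp (continuous_fst.prodMk ih)

lemma step_zero (h : ℝ) (m : ℕ) (c : NsqF V I) : (P.step h 0)^[m] c = c := by
  have : P.step h 0 = (id : NsqF V I → NsqF V I) := by funext c; simp [step]
  rw [this]; simp

lemma Phi_step (Λ : ℝ) (hΛ0 : 0 < Λ) (hΛ : ∀ k ∈ I, Real.pi * (k:ℝ) + P.L ≤ Λ) (c : NsqF V I)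
    (s : ℝ) (hs : s ∈ Icc (0:ℝ) 1) :
    P.Phi (P.step (1/(2*Λ)) s c) ≤ P.Phi c - s / (4 * Λ) * ‖P.dPhi c‖^2 := by
  have h := P.Phi_upper Λ hΛ c (-((s * (1/(2*Λ))) • P.dPhi c))
  rw [inner_neg_right, inner_smul_right, real_inner_self_eq_norm_sq, norm_neg, norm_smul, mul_pow,
    Real.norm_eq_abs, sq_abs, ← sub_eq_add_neg] at h
  refine h.trans ?_
  have h5 : 0 ≤ ‖P.dPhi c‖^2 := by positivity
  have h6 : Λ * ((s * (1/(2*Λ)))^2 * ‖P.dPhi c‖^2) = s^2 / (4 * Λ) * ‖P.dPhi c‖^2 := by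
    field_simp; ring
  have h7 : s * (1/(2*Λ)) * ‖P.dPhi c‖^2 = 2 * (s / (4 * Λ) * ‖P.dPhi c‖^2) := by
    field_simp; ring
  have h8 : s^2 / (4 * Λ) * ‖P.dPhi c‖^2 ≤ s / (4 * Λ) * ‖P.dPhi c‖^2 := by
    gcongr
    nlinarith [hs.1, hs.2]
  linarith

lemma Phi_iter (Λ : ℝ) (hΛ0 : 0 < Λ) (hΛ : ∀ k ∈ I, Real.pi * (k:ℝ) + P.L ≤ Λ)
    (s : ℝ) (hs : s ∈ Icc (0:ℝ) 1) (m : ℕ) (c : NsqF V I) :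
    P.Phi ((P.step (1/(2*Λ)) s)^[m] c) ≤ P.Phi c := by
  induction m with
  | zero => simp
  | succ m ih =>
    rw [Function.iterate_succ_apply']
    refine (P.Phi_step Λ hΛ0 hΛ _ s hs).trans ?_
    have : 0 ≤ s / (4 * Λ) * ‖P.dPhi ((P.step (1/(2*Λ)) s)^[m] c)‖^2 := by
      have := hs.1; positivity
    linarith

/-- if all gradients along the iteration are large whenever `Phi ≥ β`, then `Phi` drops -/
lemma Phi_drop (Λ : ℝ) (hΛ0 : 0 < Λ) (hΛ : ∀ k ∈ I, Real.pi * (k:ℝ) + P.L ≤ Λ)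
    (β ε : ℝ) (hε : 0 < ε) (hbig : ∀ c : NsqF V I, β ≤ P.Phi c → ε < ‖P.dPhi c‖)
    (m : ℕ) (c : NsqF V I) (hm : β ≤ P.Phi ((P.step (1/(2*Λ)) 1)^[m] c)) :
    P.Phi ((P.step (1/(2*Λ)) 1)^[m] c) ≤ P.Phi c - m * (ε^2 / (4 * Λ)) := by
  induction m with
  | zero => simp
  | succ m ih =>
    rw [Function.iterate_succ_apply'] at hm ⊢
    have h1 := P.Phi_step Λ hΛ0 hΛ ((P.step (1/(2*Λ)) 1)^[m] c) 1 ⟨zero_le_one, le_rfl⟩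
    have h0 : 0 ≤ 1 / (4 * Λ) * ‖P.dPhi ((P.step (1/(2*Λ)) 1)^[m] c)‖^2 := by positivity
    have h2 : β ≤ P.Phi ((P.step (1/(2*Λ)) 1)^[m] c) := by linarith
    have h3 := ih h2
    have h4 := hbig _ h2
    have h5 : ε^2 / (4 * Λ) ≤ 1 / (4 * Λ) * ‖P.dPhi ((P.step (1/(2*Λ)) 1)^[m] c)‖^2 := by
      rw [div_mul_eq_mul_div, one_mul]
      gcongr
    push_cast
    linarith

end NsqData
end NsqA2

end NsqPartA2

section NsqPartA3
open MeasureTheory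

noncomputable section NsqA3

set_option linter.unusedSectionVars false

namespace NsqData

variable {V : Type*} [NormedAddCommGroup V] [InnerProductSpace ℝ V] [FiniteDimensional ℝ V]
variable (P : NsqData V)
variable {I : Finset ℤ}

/-- restriction to the modes satisfying a predicate -/
def res (p : ℤ → Prop) [DecidablePred p] (c : NsqF V I) : NsqF V I :=
  WithLp.toLp 2 fun k : I => if p k then c k else 0

lemma res_apply (p : ℤ → Prop) [DecidablePred p] (c : NsqF V I) (k : I) :
    res p c k = if p k then c k else 0 := rfl

lemma res_cont (p : ℤ → Prop) [DecidablePred p] : Continuous (res p : NsqF V I → NsqF V I) := by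
  unfold res
  refine (PiLp.continuous_toLp 2 _).comp (continuous_pi fun k => ?_)
  split_ifs <;> fun_prop

/-- single mode -/
def sg (I : Finset ℤ) (j : ℤ) (v : V) : NsqF V I :=
  WithLp.toLp 2 fun k : I => if (k:ℤ) = j then v else 0

lemma sg_apply (j : ℤ) (v : V) (k : I) : sg I j v k = if (k:ℤ) = j then v else 0 := rfl

/-- norm of the positive part -/
def nn (c : NsqF V I) : ℝ := Real.sqrt (∑ k : I, max ((k:ℤ):ℝ) 0 * ‖c k‖^2)

lemma nn_cont : Continuous (nn : NsqF V I → ℝ) := by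
  unfold nn; fun_prop

lemma nn_sq (c : NsqF V I) : nn c ^ 2 = ∑ k : I, max ((k:ℤ):ℝ) 0 * ‖c k‖^2 :=
  Real.sq_sqrt (Finset.sum_nonneg fun k _ => by positivity)

lemma S_sg (h0 : (0:ℤ) ∈ I) (v : V) (t : ℝ) : nsqS P.J (sg I 0 v) t = v := by
  unfold nsqS
  rw [Finset.sum_eq_single (⟨0, h0⟩ : I)]
  · simp [sg_apply, nsqRot_zero]
  · intro k _ hk
    have : (k:ℤ) ≠ 0 := fun h => hk (Subtype.ext h)
    simp [sg_apply, this, nsqRot_zero_vec]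
  · simp

lemma H_split (u w : V) (hu : ‖u‖ ≤ P.ρ / 2) : P.H (P.c0 + (u + w)) ≤ 4 * |P.Q| * ‖w‖^2 := by
  have h0 : 0 ≤ 4 * |P.Q| * ‖w‖^2 := by positivity
  by_cases h : ‖u + w‖ ≤ P.ρ
  · rw [H, P.H_zero _ h]; exact h0
  · have h1 := norm_add_le u w
    have h2 : ‖u + w‖ ≤ 2 * ‖w‖ := by linarith
    refine (P.H_quad _).trans ?_
    calc P.Q * ‖u + w‖^2 ≤ |P.Q| * (2 * ‖w‖)^2 := by
          gcongr; exact le_abs_self _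
      _ = _ := by ring

lemma gamma_est : ∃ α : ℝ, 0 < α ∧ ∃ β : ℝ, 0 < β ∧ ∀ (I : Finset ℤ), (0:ℤ) ∈ I →
    ∀ c : NsqF V I, res (fun k => k ≤ 0) c = sg I 0 P.c0 → nn c = α → β ≤ P.Phi c := by
  obtain ⟨K, hK⟩ := exists_nat_gt (8 * |P.Q| + 1)
  have hK1 : (1:ℝ) < K := by have := abs_nonneg P.Q; linarith
  have hρ := P.ρ_pos
  refine ⟨P.ρ / (2 * K), by positivity, Real.pi * (P.ρ / (2 * K))^2 / 2, by positivity, ?_⟩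
  intro I h0 c hc hn
  set α := P.ρ / (2 * K) with hα
  have hαp : 0 < α := by positivity
  have hck : ∀ k : I, (k:ℤ) ≤ 0 → c k = if (k:ℤ) = 0 then P.c0 else 0 := by
    intro k hk
    have := congrArg (fun d : NsqF V I => d k) hc
    simpa [res_apply, sg_apply, hk] using this
  have hns := nn_sq c
  rw [hn] at hns
  have hq : q c = Real.pi * α^2 := by
    rw [hns, q]
    congr 1
    refine Finset.sum_congr rfl fun k _ => ?_
    rcases lt_trichotomy (k:ℤ) 0 with h | h | h
    · have := hck k h.le
      rw [if_neg h.ne] at this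
      simp [this]
    · simp [h]
    · rw [max_eq_left]; exact_mod_cast h.le
  set a : NsqF V I := res (fun k => 0 < k ∧ k ≤ K) c with ha
  set b : NsqF V I := res (fun k => (K:ℤ) < k) c with hb
  have hdec : c = sg I 0 P.c0 + (a + b) := by
    ext k
    simp only [PiLp.add_apply, ha, hb, res_apply, sg_apply]
    rcases le_or_gt (k:ℤ) 0 with h | h
    · rw [hck k h, if_neg (by lia : ¬ (0 < (k:ℤ) ∧ (k:ℤ) ≤ K)), if_neg (by lia : ¬ ((K:ℤ) < k))]; simp
    · rw [if_neg (by lia)]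
      rcases le_or_gt (k:ℤ) K with h' | h'
      · rw [if_pos ⟨h, h'⟩, if_neg (by lia)]; simp
      · rw [if_neg (by lia), if_pos h']; simp
  have hterm : ∀ k : I, max ((k:ℤ):ℝ) 0 * ‖c k‖^2 ≤ α^2 := by
    intro k
    rw [hns]
    exact Finset.single_le_sum (f := fun k : I => max ((k:ℤ):ℝ) 0 * ‖c k‖^2)
      (fun k _ => by positivity) (Finset.mem_univ k)
  have hSa : ∀ t, ‖nsqS P.J a t‖ ≤ P.ρ / 2 := by
    intro t
    have h1 : ‖nsqS P.J a t‖ ≤ ∑ k : I, ‖a k‖ := by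
      refine (norm_sum_le _ _).trans (le_of_eq ?_)
      exact Finset.sum_congr rfl fun k _ => nsqRot_norm P.J P.J_sq P.J_skew _ _
    have h2 : ∑ k : I, ‖a k‖ ≤ ∑ k : I, if (0 < (k:ℤ) ∧ (k:ℤ) ≤ K) then α else 0 := by
      refine Finset.sum_le_sum fun k _ => ?_
      rw [ha, res_apply]
      split_ifs with h
      · have h3 := hterm k
        have h4 : (1:ℝ) ≤ max ((k:ℤ):ℝ) 0 := le_max_of_le_left (by exact_mod_cast h.1)
        have h5 : ‖c k‖^2 ≤ α^2 := by nlinarith [sq_nonneg ‖c k‖]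
        exact (sq_le_sq₀ (norm_nonneg _) hαp.le).1 h5
      · simp
    have h3 : (∑ k : I, if (0 < (k:ℤ) ∧ (k:ℤ) ≤ K) then α else 0) ≤ K * α := by
      rw [Finset.sum_coe_sort I (fun k : ℤ => if (0 < k ∧ k ≤ (K:ℤ)) then α else 0),
        ← Finset.sum_filter, Finset.sum_const, nsmul_eq_mul]
      gcongr
      have : (I.filter fun k : ℤ => 0 < k ∧ k ≤ (K:ℤ)) ⊆ Finset.Ioc 0 (K:ℤ) := by
        intro k hk; simpa using (Finset.mem_filter.1 hk).2
      have := Finset.card_le_card this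
      simpa using this
    have h4 : K * α = P.ρ / 2 := by rw [hα]; field_simp
    linarith
  have hbn : ‖b‖^2 ≤ α^2 / K := by
    rw [le_div_iff₀ (by linarith), hns, PiLp.norm_sq_eq_of_L2, Finset.sum_mul]
    refine Finset.sum_le_sum fun k _ => ?_
    rw [hb, res_apply]
    split_ifs with h
    · rw [mul_comm]
      gcongr
      refine le_max_of_le_left ?_
      exact_mod_cast h.le
    · simp; positivity
  have hint : ∫ t in (0:ℝ)..1, P.H (nsqS P.J c t) ≤ 4 * |P.Q| * ‖b‖^2 := by
    rw [← nsq_parseval_norm P.J P.J_sq P.J_skew b, ← intervalIntegral.integral_const_mul]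
    have := nsqS_cont_t P.J b
    refine intervalIntegral.integral_mono_on zero_le_one
      ((P.H_cont.comp (nsqS_cont_t P.J c)).intervalIntegrable _ _)
      (by apply Continuous.intervalIntegrable; fun_prop) fun t _ => ?_
    rw [hdec, nsqS_add, nsqS_add, S_sg P h0]
    exact P.H_split _ _ (hSa t)
  have hfin : 4 * |P.Q| * ‖b‖^2 ≤ α^2 / 2 := by
    calc 4 * |P.Q| * ‖b‖^2 ≤ 4 * |P.Q| * (α^2 / K) := by gcongr
      _ ≤ α^2 / 2 := by
        rw [mul_div_assoc', div_le_div_iff₀ (by linarith) (by norm_num)]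
        nlinarith [sq_nonneg α]
  unfold Phi
  rw [hq]
  have := Real.pi_gt_three
  nlinarith [sq_nonneg α]

lemma Phi_le_neg (w : NsqF V I) (hw : ∀ k : I, 0 < (k:ℤ) → w k = 0) : P.Phi w ≤ 0 := by
  have h1 : q w ≤ 0 := by
    refine mul_nonpos_of_nonneg_of_nonpos Real.pi_pos.le (Finset.sum_nonpos fun k _ => ?_)
    rcases lt_or_ge 0 (k:ℤ) with h | h
    · simp [hw k h]
    · refine mul_nonpos_of_nonpos_of_nonneg (by exact_mod_cast h) (by positivity)
  have h2 : 0 ≤ ∫ t in (0:ℝ)..1, P.H (nsqS P.J w t) :=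
    intervalIntegral.integral_nonneg zero_le_one fun t _ => P.H_nonneg _
  unfold Phi; linarith

lemma Phi_le (h1 : (1:ℤ) ∈ I) (w : NsqF V I) (hw : ∀ k : I, 0 < (k:ℤ) → w k = 0) (r : ℝ) :
    P.Phi (w + r • sg I 1 P.e) ≤ - (P.a0 / 2) * ‖w‖^2 + (Real.pi - P.a1 / 2) * r^2 + P.M := by
  set c := w + r • sg I 1 P.e with hc
  have hSc := nsqS_cont_t P.J c
  have hgc := P.g_cont
  have hint : ∫ t in (0:ℝ)..1, P.H (nsqS P.J c t)
      = 1/2 * ∑ k : I, inner ℝ (P.A (c k)) (c k) + ∫ t in (0:ℝ)..1, P.g (nsqS P.J c t) := by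
    unfold H
    rw [intervalIntegral.integral_add (by apply Continuous.intervalIntegrable; fun_prop)
      (by apply Continuous.intervalIntegrable; fun_prop), intervalIntegral.integral_const_mul,
      nsq_parseval P.J P.J_sq P.J_skew P.A P.A_comm]
  have hg : -P.M ≤ ∫ t in (0:ℝ)..1, P.g (nsqS P.J c t) := by
    have : ∫ t in (0:ℝ)..1, (-P.M) ≤ ∫ t in (0:ℝ)..1, P.g (nsqS P.J c t) := by
      refine intervalIntegral.integral_mono_on zero_le_one (by simp)
        (by apply Continuous.intervalIntegrable; fun_prop) fun t _ => ?_
      exact (abs_le.1 (P.g_bd _)).1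
    simpa using this
  have hsum : q c - 1/2 * ∑ k : I, inner ℝ (P.A (c k)) (c k)
      ≤ - (P.a0 / 2) * ‖w‖^2 + (Real.pi - P.a1 / 2) * r^2 := by
    have e1 : (Real.pi - P.a1 / 2) * r^2
        = ∑ k : I, if k = (⟨1, h1⟩ : I) then (Real.pi - P.a1 / 2) * r^2 else 0 := by simp
    rw [e1, q, PiLp.norm_sq_eq_of_L2, Finset.mul_sum, Finset.mul_sum, Finset.mul_sum,
      ← Finset.sum_sub_distrib, ← Finset.sum_add_distrib]
    refine Finset.sum_le_sum fun k _ => ?_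
    have hck : c k = w k + r • (if (k:ℤ) = 1 then P.e else 0) := by simp [hc, sg_apply]
    by_cases hk : (k:ℤ) = 1
    · have hk' : k = (⟨1, h1⟩ : I) := Subtype.ext hk
      rw [if_pos hk', hck, hw k (by lia), if_pos hk, hk]
      simp only [zero_add, map_smul, P.A_e, inner_smul_left, inner_smul_right, norm_smul,
        P.e_norm, real_inner_self_eq_norm_sq]
      simp
      apply le_of_eq; ring
    · have hk' : k ≠ (⟨1, h1⟩ : I) := fun h => hk (congrArg Subtype.val h)
      rw [if_neg hk', hck, if_neg hk]
      simp only [smul_zero, add_zero]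
      have h3 := P.A_pos (w k)
      rcases lt_or_ge 0 (k:ℤ) with h | h
      · simp [hw k h]
      · have h4 : ((k:ℤ):ℝ) ≤ 0 := by exact_mod_cast h
        have h5 : Real.pi * (((k:ℤ):ℝ) * ‖w k‖^2) ≤ 0 :=
          mul_nonpos_of_nonneg_of_nonpos Real.pi_pos.le
            (mul_nonpos_of_nonpos_of_nonneg h4 (by positivity))
        linarith
  unfold Phi
  linarith

lemma linking : ∃ β : ℝ, 0 < β ∧ ∀ I : Finset ℤ, (0:ℤ) ∈ I → (1:ℤ) ∈ I → ∀ ε : ℝ, 0 < ε →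
    ∃ c : NsqF V I, β ≤ P.Phi c ∧ ‖P.dPhi c‖ ≤ ε := by
  obtain ⟨α, hα, β, hβ, hΓ⟩ := P.gamma_est
  refine ⟨β, hβ, fun I h0 h1 ε hε => ?_⟩
  by_contra! hbig
  -- constants
  obtain ⟨Λ, hΛ0, hΛ⟩ : ∃ Λ : ℝ, 0 < Λ ∧ ∀ k ∈ I, Real.pi * (k:ℝ) + P.L ≤ Λ := by
    obtain ⟨b, hb⟩ := (I.image fun k : ℤ => Real.pi * (k:ℝ) + P.L).bddAbove
    refine ⟨max b 1, by positivity, fun k hk => le_max_of_le_left (hb ?_)⟩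
    exact Finset.mem_coe.2 (Finset.mem_image.2 ⟨k, hk, rfl⟩)
  obtain ⟨m, hm⟩ := exists_nat_gt (P.M / (ε^2 / (4 * Λ)))
  rw [div_lt_iff₀ (by positivity)] at hm
  set η := min (P.a0 / 2) (P.a1 / 2 - Real.pi) with hη
  have hηp : 0 < η := lt_min (by linarith [P.a0_pos]) (by linarith [P.a1_gt])
  have hη1 : η ≤ P.a0 / 2 := min_le_left _ _
  have hη2 : η ≤ P.a1 / 2 - Real.pi := min_le_right _ _
  set cc : NsqF V I := sg I 0 P.c0 with hcc
  set τ : ℝ := ‖cc‖ + α + P.M / η + 1 with hτ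
  have hMn := P.M_nonneg
  have hMη : 0 ≤ P.M / η := by positivity
  have hτ1 : 1 ≤ τ := by have := norm_nonneg cc; linarith
  have hτM : P.M ≤ η * τ^2 := by
    have : P.M / η ≤ τ := by have := norm_nonneg cc; linarith
    rw [div_le_iff₀ hηp] at this
    nlinarith
  -- maps
  set y : ℝ → NsqF V I × ℝ → NsqF V I := fun s x =>
    (P.step (1/(2*Λ)) s)^[m] (res (fun k => k ≤ 0) x.1 + x.2 • sg I 1 P.e) with hy
  set T : ℝ → NsqF V I × ℝ → NsqF V I × ℝ := fun s x =>
    (res (fun k => k ≤ 0) (y s x) - cc + res (fun k => 0 < k) x.1, nn (y s x) - α) with hT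
  have hr0 : Continuous (res (fun k => k ≤ 0) : NsqF V I → NsqF V I) := res_cont _
  have hr1 : Continuous (res (fun k => 0 < k) : NsqF V I → NsqF V I) := res_cont _
  have hn0 : Continuous (nn : NsqF V I → ℝ) := nn_cont
  have hyc : Continuous fun z : ℝ × (NsqF V I × ℝ) => y z.1 z.2 := by
    have : Continuous fun z : ℝ × (NsqF V I × ℝ) =>
      (res (fun k => k ≤ 0) z.2.1 + z.2.2 • sg I 1 P.e : NsqF V I) := by fun_prop
    exact (P.iter_cont (1/(2*Λ)) m).comp (continuous_fst.prodMk this)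
  have hpw : ∀ w : NsqF V I, ∀ k : I, 0 < (k:ℤ) → (res (fun k => k ≤ 0) w) k = 0 := by
    intro w k hk; rw [res_apply, if_neg (by lia)]
  have hTz : ∀ s x, T s x = 0 → res (fun k => k ≤ 0) (y s x) = cc ∧ nn (y s x) = α ∧
      res (fun k => k ≤ 0) x.1 = x.1 := by
    intro s x hx
    rw [hT, Prod.ext_iff] at hx
    obtain ⟨hx1, hx2⟩ := hx
    simp only [Prod.fst_zero, Prod.snd_zero] at hx1 hx2
    refine ⟨?_, by linarith, ?_⟩
    · ext k
      have := congrArg (fun d : NsqF V I => d k) hx1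
      simp only [PiLp.add_apply, PiLp.sub_apply, PiLp.zero_apply, res_apply, hcc, sg_apply] at this ⊢
      rcases le_or_gt (k:ℤ) 0 with h | h
      · rw [if_pos h] at this ⊢
        rw [if_neg (by lia : ¬ 0 < (k:ℤ)), add_zero, sub_eq_zero] at this
        exact this
      · rw [if_neg (by lia), if_neg (by lia)]
    · ext k
      have := congrArg (fun d : NsqF V I => d k) hx1
      simp only [PiLp.add_apply, PiLp.sub_apply, PiLp.zero_apply, res_apply, hcc, sg_apply] at this ⊢
      rcases le_or_gt (k:ℤ) 0 with h | h
      · rw [if_pos h]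
      · rw [if_neg (by lia), if_neg (by lia), if_pos h] at this
        rw [if_neg (by lia)]
        simpa using this.symm
  have hPhiub : ∀ (w : NsqF V I) (r : ℝ), P.Phi (res (fun k => k ≤ 0) w + r • sg I 1 P.e)
      ≤ -η * ‖res (fun k => k ≤ 0) w‖^2 - η * r^2 + P.M := by
    intro w r
    refine (P.Phi_le h1 _ (hpw w) r).trans ?_
    have := sq_nonneg ‖res (fun k => k ≤ 0) w‖
    have := sq_nonneg r
    nlinarith
  suffices key : ∃ x ∈ closedBall (0 : NsqF V I) τ ×ˢ Icc (0:ℝ) τ, T 1 x = 0 by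
    obtain ⟨x, hxK, hx⟩ := key
    obtain ⟨e1, e2, -⟩ := hTz 1 x hx
    have h3 := hΓ I h0 _ e1 e2
    have h4 := P.Phi_drop Λ hΛ0 hΛ β ε hε hbig m _ h3
    have h5 := hPhiub x.1 x.2
    have h6 : 0 ≤ η * ‖res (fun k => k ≤ 0) x.1‖^2 := by positivity
    have h7 : 0 ≤ η * x.2^2 := by positivity
    linarith
  refine nsq_link (closedBall (0 : NsqF V I) τ ×ˢ Icc (0:ℝ) τ)
    ((isCompact_closedBall _ _).prod isCompact_Icc) (cc, α)
    ⟨by simp only [mem_closedBall, dist_zero_right]; linarith,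
      hα.le, by have := norm_nonneg cc; linarith⟩ T ?_ ?_ ?_
  · simp only [hT]
    fun_prop
  · rintro ⟨w, r⟩ ⟨-, hr⟩
    have hy0 : y 0 (w, r) = res (fun k => k ≤ 0) w + r • sg I 1 P.e := P.step_zero _ _ _
    simp only [hT, hy0]
    ext1
    · ext k
      simp only [PiLp.add_apply, PiLp.sub_apply, PiLp.smul_apply, res_apply, sg_apply, Prod.fst_sub]
      rcases le_or_gt (k:ℤ) 0 with h | h
      · rw [if_pos h, if_pos h, if_neg (by lia), if_neg (by lia)]; simp
      · rw [if_neg (by lia), if_pos h]; abel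
    · simp only [Prod.snd_sub]
      congr 1
      rw [nn, Finset.sum_eq_single (⟨1, h1⟩ : I)]
      · simp [res_apply, sg_apply, norm_smul, P.e_norm]
        exact Real.sqrt_sq hr.1
      · intro k _ hk
        have hk1 : (k:ℤ) ≠ 1 := fun h => hk (Subtype.ext h)
        simp only [PiLp.add_apply, PiLp.smul_apply, res_apply, sg_apply, if_neg hk1]
        rcases le_or_gt (k:ℤ) 0 with h | h
        · rw [max_eq_right (by exact_mod_cast h)]; simp
        · rw [if_neg (by lia)]; simp
      · simp
  · rintro ⟨w, r⟩ hx s hs hz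
    obtain ⟨e1, e2, e3⟩ := hTz s _ hz
    have h3 := hΓ I h0 _ e1 e2
    have h4 := P.Phi_iter Λ hΛ0 hΛ s hs m (res (fun k => k ≤ 0) w + r • sg I 1 P.e)
    have h5 := hPhiub w r
    simp only at e3
    have h6 : 0 ≤ η * ‖w‖^2 := by positivity
    have h7 : 0 ≤ η * r^2 := by positivity
    have hPh : P.Phi (res (fun k => k ≤ 0) w + r • sg I 1 P.e) ≤ 0 := by
      rw [frontier_prod_eq, frontier_closedBall _ (by linarith), frontier_Icc (by linarith)] at hx
      rcases hx with ⟨-, hx⟩ | ⟨hx, -⟩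
      · simp only [mem_insert_iff, mem_singleton_iff] at hx
        rcases hx with hx | hx
        · rw [hx, zero_smul, add_zero]
          exact P.Phi_le_neg _ (hpw w)
        · rw [e3] at h5 ⊢
          rw [hx] at h5 ⊢
          linarith
      · simp only [mem_sphere, dist_zero_right] at hx
        rw [e3, hx] at h5
        rw [e3] 
        linarith
    have : P.Phi (y s (w, r)) ≤ 0 := h4.trans hPh
    linarith

end NsqData
end NsqA3

end NsqPartA3

section NsqPartA4
open MeasureTheory

noncomputable section NsqA4

set_option linter.unusedSectionVars false

section general
variable {V : Type*} [NormedAddCommGroup V] [InnerProductSpace ℝ V] [FiniteDimensional ℝ V]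

lemma nsqCoef_clm (J B : V →L[ℝ] V) (hB : ∀ x, B (J x) = J (B x)) (f : ℝ → V) (hf : Continuous f)
    (k : ℤ) : nsqCoef J (fun t => B (f t)) k = B (nsqCoef J f k) := by
  unfold nsqCoef
  rw [← B.intervalIntegral_comp_comm
    ((nsqRot_cont' J (by fun_prop) hf).intervalIntegrable _ _)]
  simp only [nsqRot_comm J B hB]

lemma nsqCoef_add (J : V →L[ℝ] V) (f g : ℝ → V) (hf : Continuous f) (hg : Continuous g)
    (k : ℤ) : nsqCoef J (fun t => f t + g t) k = nsqCoef J f k + nsqCoef J g k := by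
  unfold nsqCoef
  rw [← intervalIntegral.integral_add
    ((nsqRot_cont' J (by fun_prop) hf).intervalIntegrable _ _)
    ((nsqRot_cont' J (by fun_prop) hg).intervalIntegrable _ _)]
  simp only [nsqRot_add_vec]

lemma nsqCoef_sub (J : V →L[ℝ] V) (f g : ℝ → V) (hf : Continuous f) (hg : Continuous g)
    (k : ℤ) : nsqCoef J (fun t => f t - g t) k = nsqCoef J f k - nsqCoef J g k := by
  unfold nsqCoef
  rw [← intervalIntegral.integral_sub
    ((nsqRot_cont' J (by fun_prop) hf).intervalIntegrable _ _)
    ((nsqRot_cont' J (by fun_prop) hg).intervalIntegrable _ _)]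
  simp only [nsqRot_sub_vec]

lemma nsqCoef_S (J : V →L[ℝ] V) (h2 : ∀ x, J (J x) = -x)
    (hs : ∀ x y, inner ℝ (J x) y = - inner ℝ x (J y)) {I : Finset ℤ} (c : NsqF V I) (k : I) :
    nsqCoef J (nsqS J c) k = c k := by
  set d : NsqF V I := WithLp.toLp 2 fun k : I => nsqCoef J (nsqS J c) k - c k with hd
  have h1 := nsq_coef_adj J hs (nsqS J c) (nsqS_cont_t J c) d
  have h3 := nsq_parseval J h2 hs (ContinuousLinearMap.id ℝ V) (fun _ => rfl) c d
  simp only [ContinuousLinearMap.id_apply] at h3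
  rw [h1, ← sub_eq_zero, ← Finset.sum_sub_distrib] at h3
  have h4 : ∀ k : I, inner ℝ (nsqCoef J (nsqS J c) k) (d k) - inner ℝ (c k) (d k) = ‖d k‖^2 := by
    intro k
    rw [← inner_sub_left, ← real_inner_self_eq_norm_sq]
  simp only [h4] at h3
  rw [Finset.sum_eq_zero_iff_of_nonneg (fun _ _ => by positivity)] at h3
  have := h3 k (Finset.mem_univ k)
  have : d k = 0 := by simpa using this
  exact sub_eq_zero.1 this

lemma nsqJ_norm (J : V →L[ℝ] V) (h2 : ∀ x, J (J x) = -x)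
    (hs : ∀ x y, inner ℝ (J x) y = - inner ℝ x (J y)) (v : V) : ‖J v‖ = ‖v‖ := by
  have : ‖J v‖^2 = ‖v‖^2 := by
    rw [← real_inner_self_eq_norm_sq, hs, h2, inner_neg_right, neg_neg, real_inner_self_eq_norm_sq]
  exact (sq_eq_sq₀ (norm_nonneg _) (norm_nonneg _)).1 this

lemma nsqS_hasDerivAt (J : V →L[ℝ] V) (h2 : ∀ x, J (J x) = -x) {I : Finset ℤ} (c : NsqF V I)
    (t : ℝ) : HasDerivAt (nsqS J c) (J (nsqS J
      (WithLp.toLp 2 fun k : I => (2 * Real.pi * ((k:ℤ):ℝ)) • c k : NsqF V I) t)) t := by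
  have := HasDerivAt.fun_sum (u := (Finset.univ : Finset I)) (x := t) fun k _ =>
    nsqRot_hasDerivAt J h2 (2 * Real.pi * ((k:ℤ):ℝ)) t (c k)
  convert! this using 1
  simp only [nsqS, map_sum]
  refine Finset.sum_congr rfl fun k _ => ?_
  simp only [nsqRot, map_add, map_smul, smul_add]
  module

lemma nsqS_periodic (J : V →L[ℝ] V) {I : Finset ℤ} (c : NsqF V I) : nsqS J c 1 = nsqS J c 0 := by
  unfold nsqS
  refine Finset.sum_congr rfl fun k _ => ?_
  have h3 : Real.sin (2 * Real.pi * ((k:ℤ):ℝ)) = 0 := by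
    have := Real.sin_int_mul_pi (2 * (k:ℤ))
    rw [← this]; congr 1; push_cast; ring
  have h4 : Real.cos (2 * Real.pi * ((k:ℤ):ℝ)) = 1 := by
    rw [mul_comm]; exact Real.cos_int_mul_two_pi k
  simp [nsqRot, h3, h4]

lemma nsqS_osc (J : V →L[ℝ] V) (h2 : ∀ x, J (J x) = -x)
    (hs : ∀ x y, inner ℝ (J x) y = - inner ℝ x (J y)) {I : Finset ℤ} (c : NsqF V I) (C η : ℝ)
    (hη : 0 < η)
    (hC : ∑ k : I, (2 * Real.pi * ((k:ℤ):ℝ))^2 * ‖c k‖^2 ≤ C) (s t : ℝ) (hs0 : 0 ≤ s) (hst : s ≤ t)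
    (ht : t ≤ 1) : ‖nsqS J c t - nsqS J c s‖ ≤ η * (t - s) + C / (4 * η) := by
  set d : NsqF V I := WithLp.toLp 2 fun k : I => (2 * Real.pi * ((k:ℤ):ℝ)) • c k with hd
  have hdn : ‖d‖^2 ≤ C := by
    rw [PiLp.norm_sq_eq_of_L2]
    refine le_trans (le_of_eq ?_) hC
    refine Finset.sum_congr rfl fun k _ => ?_
    rw [hd]; simp only [norm_smul, mul_pow, Real.norm_eq_abs, sq_abs]
  have hSd := nsqS_cont_t J d
  have e : nsqS J c t - nsqS J c s = ∫ u in s..t, J (nsqS J d u) := by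
    rw [intervalIntegral.integral_eq_sub_of_hasDerivAt (fun u _ => nsqS_hasDerivAt J h2 c u)]
    apply Continuous.intervalIntegrable; fun_prop
  rw [e]
  have h3 : ‖∫ u in s..t, J (nsqS J d u)‖ ≤ ∫ u in s..t, (η + 1/(4*η) * ‖nsqS J d u‖^2) := by
    refine (intervalIntegral.norm_integral_le_integral_norm hst).trans ?_
    refine intervalIntegral.integral_mono_on hst (by apply Continuous.intervalIntegrable; fun_prop)
      (by apply Continuous.intervalIntegrable; fun_prop) fun u _ => ?_
    rw [nsqJ_norm J h2 hs]
    have : 0 ≤ 1/(4*η) * (2 * η - ‖nsqS J d u‖)^2 := by positivity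
    have e2 : 1/(4*η) * (2 * η - ‖nsqS J d u‖)^2
      = η + 1/(4*η) * ‖nsqS J d u‖^2 - ‖nsqS J d u‖ := by field_simp; ring
    linarith
  refine h3.trans ?_
  rw [intervalIntegral.integral_add (by simp)
    (by apply Continuous.intervalIntegrable; fun_prop), intervalIntegral.integral_const_mul]
  have h4 : ∫ u in s..t, ‖nsqS J d u‖^2 ≤ ∫ u in (0:ℝ)..1, ‖nsqS J d u‖^2 := by
    refine intervalIntegral.integral_mono_interval hs0 hst ht ?_
      (by apply Continuous.intervalIntegrable; fun_prop)
    exact Filter.Eventually.of_forall fun u => by positivity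
  rw [nsq_parseval_norm J h2 hs] at h4
  have h5 : 1/(4*η) * ∫ u in s..t, ‖nsqS J d u‖^2 ≤ C / (4 * η) := by
    rw [div_eq_inv_mul C, one_div]
    gcongr
    linarith
  simp only [intervalIntegral.integral_const, smul_eq_mul]
  linarith

lemma nsqS_bdd (J : V →L[ℝ] V) (h2 : ∀ x, J (J x) = -x)
    (hs : ∀ x y, inner ℝ (J x) y = - inner ℝ x (J y)) {I : Finset ℤ} (c : NsqF V I) (C : ℝ)
    (hC0 : ‖c‖^2 ≤ C)
    (hC : ∑ k : I, (2 * Real.pi * ((k:ℤ):ℝ))^2 * ‖c k‖^2 ≤ C) (t : ℝ) (ht : t ∈ Icc (0:ℝ) 1) :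
    ‖nsqS J c t‖ ≤ 2 * C + 2 := by
  have hCn : 0 ≤ C := le_trans (by positivity) hC0
  have hSc := nsqS_cont_t J c
  have h1 : ∀ s ∈ Icc (0:ℝ) 1, ‖nsqS J c t‖ ≤ ‖nsqS J c s‖^2 + (2 + C / 4) := by
    intro s hs'
    have h3 : ‖nsqS J c t - nsqS J c s‖ ≤ 1 + C / 4 := by
      rcases le_total s t with h | h
      · have := nsqS_osc J h2 hs c C 1 one_pos hC s t hs'.1 h ht.2
        have := hs'.1
        have := ht.2
        linarith
      · have := nsqS_osc J h2 hs c C 1 one_pos hC t s ht.1 h hs'.2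
        rw [norm_sub_rev]
        have := ht.1
        have := hs'.2
        linarith
    have h4 := norm_le_norm_add_norm_sub' (nsqS J c t) (nsqS J c s)
    nlinarith [sq_nonneg (‖nsqS J c s‖ - 1/2)]
  have h5 : ∫ s in (0:ℝ)..1, ‖nsqS J c t‖ ≤ ∫ s in (0:ℝ)..1, (‖nsqS J c s‖^2 + (2 + C / 4)) := by
    exact intervalIntegral.integral_mono_on zero_le_one (by simp)
      (by apply Continuous.intervalIntegrable; fun_prop) h1
  rw [intervalIntegral.integral_add (by apply Continuous.intervalIntegrable; fun_prop)
    (by simp), nsq_parseval_norm J h2 hs] at h5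
  simp at h5
  linarith

lemma nsq_lim_int {W : Type*} [NormedAddCommGroup W] [NormedSpace ℝ W]
    (F : ℝ × V → W) (hF : Continuous F) (x : ℕ → ℝ → V) (y : ℝ → V) (hx : ∀ j, Continuous (x j))
    (B : ℝ) (hB : ∀ j, ∀ t ∈ Icc (0:ℝ) 1, ‖x j t‖ ≤ B)
    (hl : ∀ t ∈ Icc (0:ℝ) 1, Filter.Tendsto (fun j => x j t) Filter.atTop (nhds (y t))) :
    Filter.Tendsto (fun j => ∫ t in (0:ℝ)..1, F (t, x j t)) Filter.atTop
      (nhds (∫ t in (0:ℝ)..1, F (t, y t))) := by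
  obtain ⟨D, hD⟩ := ((isCompact_Icc (a := (0:ℝ)) (b := 1)).prod
    (isCompact_closedBall (0:V) B)).exists_bound_of_continuousOn hF.continuousOn
  refine intervalIntegral.tendsto_integral_filter_of_dominated_convergence (fun _ => D) ?_ ?_ ?_ ?_
  · refine Filter.Eventually.of_forall fun j => ?_
    exact (hF.comp (continuous_id.prodMk (hx j))).aestronglyMeasurable
  · refine Filter.Eventually.of_forall fun j => Filter.Eventually.of_forall fun t ht => ?_
    rw [uIoc_of_le zero_le_one] at ht
    exact hD _ ⟨Ioc_subset_Icc_self ht, by simpa using hB j t (Ioc_subset_Icc_self ht)⟩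
  · simp
  · refine Filter.Eventually.of_forall fun t ht => ?_
    rw [uIoc_of_le zero_le_one] at ht
    exact (hF.tendsto _).comp
      (Filter.Tendsto.prodMk_nhds tendsto_const_nhds (hl t (Ioc_subset_Icc_self ht)))

/-- uniqueness of Fourier coefficients -/
lemma nsq_fourier_scalar (f : ℝ → ℝ) (hf : Continuous f) (h01 : f 0 = f 1)
    (hc : ∀ k : ℤ, k ≠ 0 → ∫ t in (0:ℝ)..1, Real.cos (2 * Real.pi * k * t) * f t = 0)
    (hsn : ∀ k : ℤ, k ≠ 0 → ∫ t in (0:ℝ)..1, Real.sin (2 * Real.pi * k * t) * f t = 0)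
    (t : ℝ) (ht : t ∈ Icc (0:ℝ) 1) : f t = f 0 := by
  have : Fact ((0:ℝ) < 1) := ⟨one_pos⟩
  set g : ℝ → ℂ := fun t => (f t : ℂ) with hg
  have hgc : Continuous g := by fun_prop
  set F : C(AddCircle (1:ℝ), ℂ) := ⟨AddCircle.liftIco 1 0 g,
    AddCircle.liftIco_continuous (by simp [hg, h01]) hgc.continuousOn⟩ with hF
  have hco : ∀ k : ℤ, k ≠ 0 → fourierCoeff F k = 0 := by
    intro k hk
    have h1 : fourierCoeff F k = fourierCoeffOn (lt_add_of_pos_right (0:ℝ) one_pos) g k :=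
      fourierCoeff_liftIco_eq g k
    rw [h1, fourierCoeffOn_eq_integral]
    have h2 : ∀ t : ℝ, (fourier (-k) (t : AddCircle ((0:ℝ) + 1 - 0)) : ℂ) • g t
        = ((Real.cos (2 * Real.pi * k * t) * f t : ℝ) : ℂ)
          - Complex.I * ((Real.sin (2 * Real.pi * k * t) * f t : ℝ) : ℂ) := by
      intro t
      rw [fourier_coe_apply, hg, smul_eq_mul]
      have : 2 * (Real.pi:ℂ) * Complex.I * ((-k : ℤ):ℂ) * (t:ℂ) / (((0:ℝ) + 1 - 0 : ℝ) : ℂ)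
        = ((-(2 * Real.pi * k * t) : ℝ) : ℂ) * Complex.I := by push_cast; ring
      rw [this, Complex.exp_mul_I, ← Complex.ofReal_cos, ← Complex.ofReal_sin, Real.cos_neg,
        Real.sin_neg]
      push_cast; ring
    have h3 : ∫ t in (0:ℝ)..(0+1), (fourier (-k) (t : AddCircle ((0:ℝ) + 1 - 0)) : ℂ) • g t = 0 := by
      simp only [h2, zero_add]
      rw [intervalIntegral.integral_sub (by apply Continuous.intervalIntegrable; fun_prop)
        (by apply Continuous.intervalIntegrable; fun_prop), intervalIntegral.integral_const_mul,
        intervalIntegral.integral_ofReal, intervalIntegral.integral_ofReal, hc k hk, hsn k hk]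
      simp
    rw [h3, smul_zero]
  have hsum : Summable (fourierCoeff F) :=
    summable_of_ne_finset_zero (s := {0}) fun k hk => hco k (by simpa using hk)
  have hconst : ∀ x : AddCircle (1:ℝ), F x = fourierCoeff F 0 := by
    intro x
    have h1 := has_pointwise_sum_fourier_series_of_summable hsum x
    have h2 := hasSum_single (f := fun i => fourierCoeff F i • (fourier i x : ℂ)) 0
      (fun k hk => by simp only [hco k hk, zero_smul])
    rw [h1.unique h2]; simp
  have hval : ∀ s ∈ Ico (0:ℝ) 1, (f s : ℂ) = fourierCoeff F 0 := by
    intro s hs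
    rw [← hconst (s : AddCircle (1:ℝ))]
    have : AddCircle.liftIco (1:ℝ) 0 g (s : AddCircle (1:ℝ)) = g s :=
      AddCircle.liftIco_coe_apply (by simpa using hs)
    exact this.symm
  have h0 := hval 0 ⟨le_rfl, one_pos⟩
  rcases eq_or_lt_of_le ht.2 with h | h
  · rw [h, h01]
  · have := (hval t ⟨ht.1, h⟩).trans h0.symm
    exact_mod_cast this

lemma nsq_fourier (J : V →L[ℝ] V)
    (h2 : ∀ x, J (J x) = -x) (z : ℝ → V) (hz : Continuous z) (h01 : z 0 = z 1)
    (hk : ∀ k : ℤ, k ≠ 0 → nsqCoef J z k = 0) (t : ℝ) (ht : t ∈ Icc (0:ℝ) 1) : z t = z 0 := by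
  have hcs : ∀ k : ℤ, k ≠ 0 → (∫ t in (0:ℝ)..1, Real.cos (2 * Real.pi * k * t) • z t = 0) ∧
      (∫ t in (0:ℝ)..1, Real.sin (2 * Real.pi * k * t) • z t = 0) := by
    intro k hk0
    have h1 := hk k hk0
    have h3 := hk (-k) (by simpa using hk0)
    have i1 : IntervalIntegrable (fun t : ℝ => Real.cos (2 * Real.pi * k * t) • z t) volume 0 1 := by
      apply Continuous.intervalIntegrable; fun_prop
    have i2 : IntervalIntegrable (fun t : ℝ => Real.sin (2 * Real.pi * k * t) • J (z t)) volume 0 1 := by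
      apply Continuous.intervalIntegrable; fun_prop
    have i3 : IntervalIntegrable (fun t : ℝ => Real.sin (2 * Real.pi * k * t) • (z t)) volume 0 1 := by
      apply Continuous.intervalIntegrable; fun_prop
    simp only [nsqCoef, nsqRot, Real.cos_neg, Real.sin_neg, Int.cast_neg, mul_neg, neg_mul,
      neg_smul, neg_neg, ← sub_eq_add_neg] at h1 h3
    rw [intervalIntegral.integral_sub i1 i2] at h1
    rw [intervalIntegral.integral_add i1 i2] at h3
    set a := ∫ t in (0:ℝ)..1, Real.cos (2 * Real.pi * k * t) • z t
    set b := ∫ t in (0:ℝ)..1, Real.sin (2 * Real.pi * k * t) • J (z t) with hb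
    have ha : a = 0 := by
      have : (2:ℝ) • a = 0 := by
        rw [two_smul]
        calc a + a = (a - b) + (a + b) := by abel
          _ = 0 := by rw [h1, h3, add_zero]
      simpa using this
    refine ⟨ha, ?_⟩
    have hb0 : b = 0 := by rw [ha, zero_add] at h3; exact h3
    have : b = J (∫ t in (0:ℝ)..1, Real.sin (2 * Real.pi * k * t) • z t) := by
      rw [← J.intervalIntegral_comp_comm i3, hb]
      simp only [map_smul]
    rw [hb0] at this
    have h5 := h2 (∫ t in (0:ℝ)..1, Real.sin (2 * Real.pi * k * t) • z t)
    rw [← this, map_zero] at h5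
    simpa using h5.symm
  refine ext_inner_left ℝ fun v => ?_
  refine nsq_fourier_scalar (fun t => inner ℝ v (z t)) (by fun_prop) (by simp only [h01]) ?_ ?_ t ht
  · intro k hk0
    have := (innerSL ℝ v).intervalIntegral_comp_comm (a := 0) (b := 1) (μ := volume)
      (f := fun t : ℝ => Real.cos (2 * Real.pi * k * t) • z t) 
      (by apply Continuous.intervalIntegrable; fun_prop)
    rw [(hcs k hk0).1] at this
    simpa [inner_smul_right] using this
  · intro k hk0
    have := (innerSL ℝ v).intervalIntegral_comp_comm (a := 0) (b := 1) (μ := volume)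
      (f := fun t : ℝ => Real.sin (2 * Real.pi * k * t) • z t) 
      (by apply Continuous.intervalIntegrable; fun_prop)
    rw [(hcs k hk0).2] at this
    simpa [inner_smul_right] using this

/-- coefficient of the derivative -/
lemma nsqCoef_deriv (J : V →L[ℝ] V) (h2 : ∀ x, J (J x) = -x) (y y' : ℝ → V) (hy' : Continuous y')
    (hd : ∀ t, HasDerivAt y (y' t) t) (h01 : y 0 = y 1) (k : ℤ) :
    nsqCoef J y' k = (2 * Real.pi * (k:ℝ)) • J (nsqCoef J y k) := by
  have hyc : Continuous y := continuous_iff_continuousAt.2 fun t => (hd t).continuousAt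
  have hw : ∀ t, HasDerivAt (fun t => nsqRot J (-(2 * Real.pi * k * t)) (y t))
      (nsqRot J (-(2 * Real.pi * k * t)) (y' t)
        - (2 * Real.pi * (k:ℝ)) • J (nsqRot J (-(2 * Real.pi * k * t)) (y t))) t := by
    intro t
    have h1 : HasDerivAt (fun t : ℝ => -(2 * Real.pi * k * t)) (-(2 * Real.pi * k)) t := by
      simpa using ((hasDerivAt_id t).const_mul (2 * Real.pi * (k:ℝ))).fun_neg
    have := (h1.cos.smul (hd t)).add (h1.sin.smul (J.hasFDerivAt.comp_hasDerivAt t (hd t)))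
    convert! this using 1
    simp only [nsqRot, map_add, map_smul, h2, Function.comp]
    module
  have hc1 : Continuous fun t => nsqRot J (-(2 * Real.pi * k * t)) (y' t) :=
    nsqRot_cont' J (by fun_prop) hy'
  have hc2 : Continuous fun t => nsqRot J (-(2 * Real.pi * k * t)) (y t) :=
    nsqRot_cont' J (by fun_prop) hyc
  have h3 := intervalIntegral.integral_eq_sub_of_hasDerivAt (a := 0) (b := 1) (fun t _ => hw t)
    (by apply Continuous.intervalIntegrable; fun_prop)
  rw [intervalIntegral.integral_sub (hc1.intervalIntegrable _ _)
    (by apply Continuous.intervalIntegrable; fun_prop), intervalIntegral.integral_smul,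
    J.intervalIntegral_comp_comm (hc2.intervalIntegrable _ _)] at h3
  have h4 : nsqRot J (-(2 * Real.pi * (k:ℝ) * 1)) (y 1) = y 1 := by
    have h3 : Real.sin (2 * Real.pi * (k:ℝ)) = 0 := by
      have := Real.sin_int_mul_pi (2 * k)
      rw [← this]; congr 1; push_cast; ring
    have h4 : Real.cos (2 * Real.pi * (k:ℝ)) = 1 := by
      rw [mul_comm]; exact Real.cos_int_mul_two_pi k
    simp [nsqRot, h3, h4]
  have h5 : nsqRot J (-(2 * Real.pi * (k:ℝ) * 0)) (y 0) = y 0 := by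
    simp [nsqRot]
  rw [h4, h5, h01, sub_self, sub_eq_zero] at h3
  exact h3

end general
end NsqA4

end NsqPartA4

section NsqPartA5
open MeasureTheory

noncomputable section NsqA5

set_option linter.unusedSectionVars false
namespace NsqData

variable {V : Type*} [NormedAddCommGroup V] [InnerProductSpace ℝ V] [FiniteDimensional ℝ V]
variable (P : NsqData V)

lemma apriori : ∃ C : ℝ, ∀ (I : Finset ℤ) (c : NsqF V I), ‖P.dPhi c‖ ≤ 1 →
    ‖c‖^2 ≤ C ∧ ∑ k : I, (2 * Real.pi * ((k:ℤ):ℝ))^2 * ‖c k‖^2 ≤ C := by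
  have hγ := P.γ_pos
  have hM := P.M_nonneg
  have hpi := Real.pi_gt_three
  set D := (2 + 2 * P.M^2) / P.γ^2 with hD
  refine ⟨(2 * Real.pi)^2 * D, fun I c hc => ?_⟩
  have hSc := nsqS_cont_t P.J c
  have hGc := P.G_cont
  have hkey : ∑ k : I, (1 + |((k:ℤ):ℝ)|)^2 * ‖c k‖^2 ≤ D := by
    rw [hD, le_div_iff₀ (by positivity), Finset.sum_mul]
    have h1 : ∀ k : I, (1 + |((k:ℤ):ℝ)|)^2 * ‖c k‖^2 * P.γ^2
        ≤ 2 * ‖P.dPhi c k‖^2 + 2 * ‖nsqCoef P.J (fun t => P.G (nsqS P.J c t)) k‖^2 := by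
      intro k
      have e1 : (2 * Real.pi * ((k:ℤ):ℝ)) • c k - P.A (c k)
          = P.dPhi c k + nsqCoef P.J (fun t => P.G (nsqS P.J c t)) k := by
        have : nsqCoef P.J (fun t => P.dH (nsqS P.J c t)) k
            = P.A (c k) + nsqCoef P.J (fun t => P.G (nsqS P.J c t)) k := by
          unfold dH
          rw [nsqCoef_add P.J _ _ (by fun_prop) (by fun_prop),
            nsqCoef_clm P.J P.A P.A_comm _ hSc, nsqCoef_S P.J P.J_sq P.J_skew]
        simp only [dPhi]
        rw [this]; abel
      have e2 := P.gap k (c k)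
      rw [e1] at e2
      have e3 := norm_add_le (P.dPhi c k) (nsqCoef P.J (fun t => P.G (nsqS P.J c t)) k)
      have e4 : 0 ≤ P.γ * (1 + |((k:ℤ):ℝ)|) * ‖c k‖ := by positivity
      calc (1 + |((k:ℤ):ℝ)|)^2 * ‖c k‖^2 * P.γ^2 = (P.γ * (1 + |((k:ℤ):ℝ)|) * ‖c k‖)^2 := by ring
        _ ≤ (‖P.dPhi c k‖ + ‖nsqCoef P.J (fun t => P.G (nsqS P.J c t)) k‖)^2 := by
          gcongr; linarith
        _ ≤ _ := by
          nlinarith [sq_nonneg (‖P.dPhi c k‖ - ‖nsqCoef P.J (fun t => P.G (nsqS P.J c t)) k‖)]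
    refine (Finset.sum_le_sum fun k _ => h1 k).trans ?_
    rw [Finset.sum_add_distrib, ← Finset.mul_sum, ← Finset.mul_sum, ← PiLp.norm_sq_eq_of_L2]
    have h2 := nsq_bessel P.J P.J_sq P.J_skew (fun t => P.G (nsqS P.J c t)) (by fun_prop) I
    have h3 : ∫ t in (0:ℝ)..1, ‖P.G (nsqS P.J c t)‖^2 ≤ ∫ t in (0:ℝ)..1, P.M^2 := by
      refine intervalIntegral.integral_mono_on zero_le_one
        (by apply Continuous.intervalIntegrable; fun_prop) (by simp) fun t _ => ?_
      have := P.G_bd (nsqS P.J c t)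
      gcongr
    simp only [intervalIntegral.integral_const, sub_zero, one_smul] at h3
    have h4 : ‖P.dPhi c‖^2 ≤ 1 := by
      have := norm_nonneg (P.dPhi c)
      nlinarith
    linarith
  constructor
  · rw [PiLp.norm_sq_eq_of_L2]
    have h5 : ∑ k : I, ‖c k‖^2 ≤ ∑ k : I, (1 + |((k:ℤ):ℝ)|)^2 * ‖c k‖^2 := by
      refine Finset.sum_le_sum fun k _ => le_mul_of_one_le_left (by positivity) ?_
      have := abs_nonneg ((k:ℤ):ℝ)
      nlinarith
    have h0D : 0 ≤ D := by positivity
    have h1D : D ≤ (2 * Real.pi)^2 * D := le_mul_of_one_le_left h0D (by nlinarith)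
    linarith
  · calc ∑ k : I, (2 * Real.pi * ((k:ℤ):ℝ))^2 * ‖c k‖^2
        ≤ ∑ k : I, (2 * Real.pi)^2 * ((1 + |((k:ℤ):ℝ)|)^2 * ‖c k‖^2) := by
          refine Finset.sum_le_sum fun k _ => ?_
          rw [← mul_assoc, mul_pow]
          rw [← sq_abs ((k:ℤ):ℝ)]
          gcongr
          linarith
      _ ≤ _ := by
        rw [← Finset.mul_sum]; gcongr

lemma Phi_eq {I : Finset ℤ} (c : NsqF V I) : P.Phi c = 1/2 * inner ℝ (P.dPhi c) c +
    ∫ t in (0:ℝ)..1, (1/2 * inner ℝ (P.dH (nsqS P.J c t)) (nsqS P.J c t) - P.H (nsqS P.J c t)) := by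
  have hSc := nsqS_cont_t P.J c
  have hH := P.H_cont
  have hdH := P.dH_cont
  rw [intervalIntegral.integral_sub (by apply Continuous.intervalIntegrable; fun_prop)
    (by apply Continuous.intervalIntegrable; fun_prop), intervalIntegral.integral_const_mul,
    nsq_coef_adj P.J P.J_skew (fun t => P.dH (nsqS P.J c t)) (hdH.comp hSc)]
  have h2 : inner ℝ (P.dPhi c) c = ∑ k : I, (2 * Real.pi * ((k:ℤ):ℝ)) * ‖c k‖^2
      - ∑ k : I, inner ℝ (nsqCoef P.J (fun t => P.dH (nsqS P.J c t)) k) (c k) := by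
    rw [PiLp.inner_apply, ← Finset.sum_sub_distrib]
    refine Finset.sum_congr rfl fun k _ => ?_
    simp [dPhi, inner_sub_left, inner_smul_left]
  have h3 : q c = 1/2 * ∑ k : I, (2 * Real.pi * ((k:ℤ):ℝ)) * ‖c k‖^2 := by
    rw [q, Finset.mul_sum, Finset.mul_sum]
    exact Finset.sum_congr rfl fun k _ => by ring
  rw [Phi, h3, h2]; ring

open BoundedContinuousFunction in
/-- compactness: extraction of a convergent subsequence -/
lemma extract (C : ℝ) (I : ℕ → Finset ℤ) (c : ∀ j, NsqF V (I j)) (h1 : ∀ j, ‖c j‖^2 ≤ C)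
    (h2 : ∀ j, ∑ k : I j, (2 * Real.pi * ((k:ℤ):ℝ))^2 * ‖c j k‖^2 ≤ C) :
    ∃ σ : ℕ → ℕ, StrictMono σ ∧ ∃ y : ℝ → V, Continuous y ∧ ∀ t ∈ Icc (0:ℝ) 1,
      Filter.Tendsto (fun j => nsqS P.J (c (σ j)) t) Filter.atTop (nhds (y t)) := by
  have hC : 0 ≤ C := le_trans (by positivity) (h1 0)
  set f : ℕ → (Icc (0:ℝ) 1 →ᵇ V) := fun j =>
    BoundedContinuousFunction.mkOfCompact ⟨fun t => nsqS P.J (c j) t,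
      (nsqS_cont_t P.J (c j)).comp continuous_subtype_val⟩ with hf
  have hfa : ∀ j t, f j t = nsqS P.J (c j) t := fun j t => rfl
  have hcpt : IsCompact (closure (range f)) := by
    refine arzela_ascoli (closedBall (0:V) (2 * C + 2)) (isCompact_closedBall _ _) (range f) ?_ ?_
    · rintro _ t ⟨j, rfl⟩
      rw [mem_closedBall, dist_zero_right, hfa]
      exact nsqS_bdd P.J P.J_sq P.J_skew (c j) C (h1 j) (h2 j) t t.2
    · intro t
      rw [Metric.equicontinuousAt_iff]
      intro ε hε
      set η := C / (2 * ε) + 1 with hη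
      have hη0 : 0 < η := by positivity
      refine ⟨ε / (2 * η), by positivity, ?_⟩
      rintro s hs ⟨_, j, rfl⟩
      have hb : C / (4 * η) < ε / 2 := by
        rw [div_lt_iff₀ (by positivity), hη]
        have : ε / 2 * (4 * (C / (2 * ε) + 1)) = C + 2 * ε := by field_simp; ring
        linarith
      have hs' : |(s:ℝ) - t| < ε / (2 * η) := hs
      have hm : η * |(s:ℝ) - t| < ε / 2 := by
        calc η * |(s:ℝ) - t| < η * (ε / (2 * η)) := by gcongr
          _ = ε / 2 := by field_simp
      change dist (f j t) (f j s) < ε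
      rw [hfa, hfa, dist_eq_norm]
      rcases le_total (s:ℝ) t with h | h
      · have := nsqS_osc P.J P.J_sq P.J_skew (c j) C η hη0 (h2 j) s t s.2.1 h t.2.2
        rw [abs_of_nonpos (by linarith)] at hm
        linarith
      · have := nsqS_osc P.J P.J_sq P.J_skew (c j) C η hη0 (h2 j) t s t.2.1 h s.2.2
        rw [abs_of_nonneg (by linarith)] at hm
        rw [norm_sub_rev]
        linarith
  obtain ⟨F, -, σ, hσ, hl⟩ := hcpt.tendsto_subseq (fun j => subset_closure (mem_range_self j))
  refine ⟨σ, hσ, fun t => F (projIcc 0 1 zero_le_one t),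
    F.continuous.comp continuous_projIcc, fun t ht => ?_⟩
  simp only [projIcc_of_mem _ ht]
  exact ((continuous_eval_const
    (F := (Icc (0:ℝ) 1 →ᵇ V)) (⟨t, ht⟩ : Icc (0:ℝ) 1)).tendsto F).comp hl

theorem main : ∃ x : ℝ → V, x 0 = x 1 ∧ (∀ t ∈ Icc (0:ℝ) 1, HasDerivAt x (P.J (P.dH (x t))) t) ∧
    0 < ∫ t in (0:ℝ)..1, (1/2 * inner ℝ (P.dH (x t)) (x t) - P.H (x t)) := by
  obtain ⟨β, hβ, hlink⟩ := P.linking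
  obtain ⟨C, hC⟩ := P.apriori
  set I : ℕ → Finset ℤ := fun j => Finset.Icc (-(j + 1 : ℤ)) (j + 1) with hI
  have hlk : ∀ j : ℕ, ∃ c : NsqF V (I j), β ≤ P.Phi c ∧ ‖P.dPhi c‖ ≤ 1 / ((j:ℝ) + 1) := by
    intro j
    refine hlink (I j) ?_ ?_ _ (by positivity)
    · simp only [hI, Finset.mem_Icc]; lia
    · simp only [hI, Finset.mem_Icc]; lia
  choose c hcβ hcd using hlk
  have hc1 : ∀ j, ‖P.dPhi (c j)‖ ≤ 1 := by
    intro j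
    refine (hcd j).trans ?_
    rw [div_le_one (by positivity)]
    have : (0:ℝ) ≤ j := by positivity
    linarith
  have hCa : ∀ j, ‖c j‖^2 ≤ C := fun j => (hC _ _ (hc1 j)).1
  have hCb : ∀ j, ∑ k : I j, (2 * Real.pi * ((k:ℤ):ℝ))^2 * ‖c j k‖^2 ≤ C :=
    fun j => (hC _ _ (hc1 j)).2
  obtain ⟨σ, hσ, y, hyc, hy⟩ := P.extract C I c hCa hCb
  have hH := P.H_cont
  have hdH := P.dH_cont
  have hlim : ∀ (F : ℝ × V → V),
      Continuous F → Filter.Tendsto (fun j => ∫ t in (0:ℝ)..1, F (t, nsqS P.J (c (σ j)) t))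
        Filter.atTop (nhds (∫ t in (0:ℝ)..1, F (t, y t))) := by
    intro F hF
    exact nsq_lim_int F hF (fun j => nsqS P.J (c (σ j))) y (fun j => nsqS_cont_t _ _) (2 * C + 2)
      (fun j t ht => nsqS_bdd P.J P.J_sq P.J_skew _ C (hCa _) (hCb _) t ht) hy
  have hsmall : Filter.Tendsto (fun j => 1 / (((σ j : ℕ):ℝ) + 1)) Filter.atTop (nhds 0) :=
    tendsto_one_div_add_atTop_nhds_zero_nat.comp hσ.tendsto_atTop
  -- the coefficient equation
  have hco : ∀ k : ℤ, (2 * Real.pi * (k:ℝ)) • nsqCoef P.J y k = nsqCoef P.J (fun t => P.dH (y t)) k := by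
    intro k
    have l1 : Filter.Tendsto (fun j => nsqCoef P.J (nsqS P.J (c (σ j))) k) Filter.atTop
        (nhds (nsqCoef P.J y k)) :=
      hlim (fun p : ℝ × V => nsqRot P.J (-(2 * Real.pi * k * p.1)) p.2)
        (nsqRot_cont' P.J (by fun_prop) (by fun_prop))
    have l2 : Filter.Tendsto (fun j => nsqCoef P.J (fun t => P.dH (nsqS P.J (c (σ j)) t)) k)
        Filter.atTop (nhds (nsqCoef P.J (fun t => P.dH (y t)) k)) :=
      hlim (fun p : ℝ × V => nsqRot P.J (-(2 * Real.pi * k * p.1)) (P.dH p.2))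
        (nsqRot_cont' P.J (by fun_prop) (by fun_prop))
    have l3 := ((l1.const_smul (2 * Real.pi * (k:ℝ))).sub l2).norm
    have l4 : Filter.Tendsto (fun j => ‖(2 * Real.pi * (k:ℝ)) • nsqCoef P.J (nsqS P.J (c (σ j))) k
        - nsqCoef P.J (fun t => P.dH (nsqS P.J (c (σ j)) t)) k‖) Filter.atTop (nhds 0) := by
      refine squeeze_zero' (Filter.Eventually.of_forall fun j => norm_nonneg _) ?_ hsmall
      filter_upwards [Filter.eventually_ge_atTop k.natAbs] with j hj
      have hσj : j ≤ σ j := hσ.id_le j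
      have hk : k ∈ I (σ j) := by simp only [hI, Finset.mem_Icc]; lia
      refine le_trans ?_ (hcd (σ j))
      have h1 := PiLp.norm_apply_le (P.dPhi (c (σ j))) ⟨k, hk⟩
      have h2 := nsqCoef_S P.J P.J_sq P.J_skew (c (σ j)) ⟨k, hk⟩
      simp only at h2
      rw [h2]
      exact h1
    have := tendsto_nhds_unique l3 l4
    rw [norm_eq_zero, sub_eq_zero] at this
    exact this
  have hy01 : y 0 = y 1 := by
    have a := hy 0 (by simp)
    have b := hy 1 (by simp)
    simp only [nsqS_periodic] at b
    exact tendsto_nhds_unique a b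
  -- the integral equation
  set x : ℝ → V := fun t => y 0 + ∫ s in (0:ℝ)..t, P.J (P.dH (y s)) with hx
  have hFc : Continuous fun s => P.J (P.dH (y s)) := by fun_prop
  have hxd : ∀ t, HasDerivAt x (P.J (P.dH (y t))) t := by
    intro t
    have := intervalIntegral.integral_hasDerivAt_right (hFc.intervalIntegrable 0 t)
      hFc.aestronglyMeasurable.stronglyMeasurableAtFilter hFc.continuousAt
    exact this.const_add (y 0)
  have hxc : Continuous x := continuous_iff_continuousAt.2 fun t => (hxd t).continuousAt
  have hx0 : x 0 = y 0 := by simp [hx]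
  have hx1 : x 0 = x 1 := by
    have h0 := hco 0
    simp only [nsqCoef, nsqRot, Int.cast_zero, mul_zero, zero_mul, neg_zero, Real.cos_zero,
      Real.sin_zero, zero_smul, one_smul, add_zero] at h0
    have : ∫ s in (0:ℝ)..1, P.J (P.dH (y s)) = 0 := by
      rw [P.J.intervalIntegral_comp_comm (by apply Continuous.intervalIntegrable; fun_prop), ← h0,
        map_zero]
    simp [hx, this]
  have hxy : ∀ t ∈ Icc (0:ℝ) 1, x t = y t := by
    intro t ht
    have := nsq_fourier P.J P.J_sq (fun t => x t - y t) (by fun_prop) (by simp only [← hx1, ← hy01])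
      (fun k hk => ?_) t ht
    · simp only [hx0, sub_self] at this
      exact sub_eq_zero.1 this
    · rw [nsqCoef_sub P.J _ _ hxc hyc, sub_eq_zero]
      have h1 := nsqCoef_deriv P.J P.J_sq x _ hFc hxd hx1 k
      rw [nsqCoef_clm P.J P.J (fun _ => rfl) _ (by fun_prop), ← hco k, map_smul] at h1
      have hk' : 2 * Real.pi * (k:ℝ) ≠ 0 := by
        have : (k:ℝ) ≠ 0 := by exact_mod_cast hk
        positivity
      have h2 := smul_right_injective V hk' h1
      have h3 := congrArg P.J h2
      rw [P.J_sq, P.J_sq] at h3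
      exact (neg_injective h3).symm
  refine ⟨x, hx1, fun t ht => ?_, ?_⟩
  · rw [hxy t ht]; exact hxd t
  · have l1 := nsq_lim_int (fun p : ℝ × V => 1/2 * inner ℝ (P.dH p.2) p.2 - P.H p.2) (by fun_prop)
      (fun j => nsqS P.J (c (σ j))) y (fun j => nsqS_cont_t _ _) (2 * C + 2)
      (fun j t ht => nsqS_bdd P.J P.J_sq P.J_skew _ C (hCa _) (hCb _) t ht) hy
    have e1 : ∫ t in (0:ℝ)..1, (1/2 * inner ℝ (P.dH (x t)) (x t) - P.H (x t))
        = ∫ t in (0:ℝ)..1, (1/2 * inner ℝ (P.dH (y t)) (y t) - P.H (y t)) := by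
      refine intervalIntegral.integral_congr fun t ht => ?_
      rw [uIcc_of_le zero_le_one] at ht
      simp only [hxy t ht]
    rw [e1]
    refine lt_of_lt_of_le hβ ?_
    have l2 : Filter.Tendsto (fun j => P.Phi (c (σ j)) - 1/2 * inner ℝ (P.dPhi (c (σ j))) (c (σ j)))
        Filter.atTop (nhds (∫ t in (0:ℝ)..1, (1/2 * inner ℝ (P.dH (y t)) (y t) - P.H (y t)))) := by
      refine l1.congr fun j => ?_
      rw [P.Phi_eq]; ring
    have l3 : Filter.Tendsto (fun j => inner ℝ (P.dPhi (c (σ j))) (c (σ j)))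
        Filter.atTop (nhds 0) := by
      have := hsmall.mul_const (1 + C)
      rw [zero_mul] at this
      refine squeeze_zero_norm (fun j => ?_) this
      refine (norm_inner_le_norm _ _).trans ?_
      have h1 : ‖c (σ j)‖ ≤ 1 + C := by
        have := hCa (σ j)
        nlinarith [sq_nonneg (‖c (σ j)‖ - 1/2)]
      exact mul_le_mul (hcd _) h1 (norm_nonneg _) (by positivity)
    have l4 := l2.add (l3.const_mul (1/2))
    rw [mul_zero, add_zero] at l4
    refine ge_of_tendsto' l4 fun j => ?_
    have := hcβ (σ j)
    linarith

end NsqData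
end NsqA5

end NsqPartA5

section NsqPartB3
open MeasureTheory

noncomputable section NsqB3

set_option linter.unusedSectionVars false

variable {V : Type*} [NormedAddCommGroup V] [InnerProductSpace ℝ V] [FiniteDimensional ℝ V]

lemma NsqData.dH_lip (P : NsqData V) : ∃ K : NNReal, LipschitzWith K (fun z => P.J (P.dH z)) := by
  refine ⟨_, P.J.lipschitz.comp (P.A.lipschitz.add P.G_lip)⟩

lemma NsqData.H_hasFDerivAt (P : NsqData V) (z : V) :
    HasFDerivAt P.H (innerSL ℝ (P.dH z)) z := by
  have h1 : HasFDerivAt (fun z => (1/2 : ℝ) * inner ℝ (P.A z) z) (innerSL ℝ (P.A z)) z := by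
    have := ((P.A.hasFDerivAt (x := z)).inner ℝ (hasFDerivAt_id z)).const_mul (1/2 : ℝ)
    convert! this using 1
    ext v
    have h3 := P.A_symm v z
    simp only [innerSL_apply_apply, ContinuousLinearMap.smul_apply,
      ContinuousLinearMap.comp_apply, ContinuousLinearMap.prod_apply,
      fderivInnerCLM_apply, smul_eq_mul, ContinuousLinearMap.id_apply, id]
    rw [h3, real_inner_comm (P.A z) v]; ring
  have h2 := h1.add (P.grad z).hasFDerivAt
  convert! h2 using 1
  ext v
  simp [NsqData.dH, inner_add_left]

lemma nsq_const (P : NsqData V) (x : ℝ → V)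
    (hx : ∀ t ∈ Icc (0:ℝ) 1, HasDerivAt x (P.J (P.dH (x t))) t) (t₀ : ℝ) (ht₀ : t₀ ∈ Icc (0:ℝ) 1)
    (h0 : P.dH (x t₀) = 0) : ∀ t ∈ Icc (0:ℝ) 1, x t = x t₀ := by
  obtain ⟨K, hK⟩ := P.dH_lip
  have hxc : ContinuousOn x (Icc 0 1) := fun t ht => (hx t ht).continuousAt.continuousWithinAt
  have hr : EqOn x (fun _ => x t₀) (Icc t₀ 1) := by
    refine ODE_solution_unique_of_mem_Icc_right (v := fun _ z => P.J (P.dH z)) (s := fun _ => univ)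
      (K := K) (fun t _ => hK.lipschitzOnWith) (hxc.mono (Icc_subset_Icc_left ht₀.1))
      (fun t ht => (hx t ⟨ht₀.1.trans ht.1, ht.2.le⟩).hasDerivWithinAt) (fun _ _ => mem_univ _)
      continuousOn_const (fun t ht => ?_) (fun _ _ => mem_univ _) rfl
    rw [h0, map_zero]; exact hasDerivWithinAt_const _ _ _
  have hl : EqOn x (fun _ => x t₀) (Icc 0 t₀) := by
    refine ODE_solution_unique_of_mem_Icc_left (v := fun _ z => P.J (P.dH z)) (s := fun _ => univ)
      (K := K) (fun t _ => hK.lipschitzOnWith) (hxc.mono (Icc_subset_Icc_right ht₀.2))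
      (fun t ht => (hx t ⟨ht.1.le, ht.2.trans ht₀.2⟩).hasDerivWithinAt) (fun _ _ => mem_univ _)
      continuousOn_const (fun t ht => ?_) (fun _ _ => mem_univ _) rfl
    rw [h0, map_zero]; exact hasDerivWithinAt_const _ _ _
  intro t ht
  rcases le_total t t₀ with h | h
  · exact hl ⟨ht.1, h⟩
  · exact hr ⟨h, ht.2⟩

lemma nsq_cst_of_deriv (f : ℝ → V) (hf : ∀ t ∈ Icc (0:ℝ) 1, HasDerivAt f 0 t) (t : ℝ)
    (ht : t ∈ Icc (0:ℝ) 1) : f t = f 0 :=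
  constant_of_has_deriv_right_zero (fun t ht => (hf t ht).continuousAt.continuousWithinAt)
    (fun t ht => (hf t ⟨ht.1, ht.2.le⟩).hasDerivWithinAt) t ht

lemma nsq_contra (P : NsqData V) (U U2 : Set V) (hU : IsOpen U) (hU2 : IsOpen U2)
    (hdisj : Disjoint U U2) (hoff : ∀ z, z ∉ U → z ∉ U2 → P.dH z = 0)
    (h2 : ∀ z ∈ U2, 1/2 * inner ℝ (P.dH z) z ≤ P.H z) (φ ψ : V → V)
    (hφψ : ∀ z ∈ U, φ (ψ z) = z) (hψ : ∀ z ∈ U, DifferentiableAt ℝ ψ z) (D : V → V →L[ℝ] V)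
    (hφ : ∀ z ∈ U, HasFDerivAt φ (D z) (ψ z)) (hsurj : ∀ z ∈ U, Function.Surjective (D z))
    (hsym : ∀ z ∈ U, ∀ u v, inner ℝ (P.J (D z u)) (D z v) = inner ℝ (P.J u) v)
    (l : ℝ → ℝ) (hl0 : ∀ s, 0 ≤ l s) (hl1 : ∀ s, l s < 2 * Real.pi)
    (hH : ∀ z ∈ U, ∀ v, inner ℝ (P.dH z) (D z v) = l (‖ψ z‖^2) * inner ℝ (ψ z) v) : False := by
  obtain ⟨x, hx01, hx, hpos⟩ := P.main
  have hint : ∀ F : ℝ → ℝ, (∀ t ∈ Icc (0:ℝ) 1, F t ≤ 0) → ∫ t in (0:ℝ)..1, F t ≤ 0 := by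
    intro F hF
    have := intervalIntegral.integral_nonneg (μ := volume) (f := fun t => - F t) zero_le_one
      (fun t ht => by have := hF t ht; linarith)
    rw [intervalIntegral.integral_neg] at this
    linarith
  have hne : ∀ t ∈ Icc (0:ℝ) 1, P.dH (x t) ≠ 0 := by
    intro t₀ ht₀ h0
    have hc := nsq_const P x hx t₀ ht₀ h0
    refine absurd hpos (not_lt.2 (hint _ fun t ht => ?_))
    rw [hc t ht, h0, inner_zero_left]
    have := P.H_nonneg (x t₀)
    simp only [NsqData.H]; linarith
  have hpre : IsPreconnected (x '' Icc (0:ℝ) 1) :=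
    isPreconnected_Icc.image _ fun t ht => (hx t ht).continuousAt.continuousWithinAt
  have hsub : x '' Icc (0:ℝ) 1 ⊆ U ∪ U2 := by
    rintro _ ⟨t, ht, rfl⟩
    by_contra h
    rw [mem_union, not_or] at h
    exact hne t ht (hoff _ h.1 h.2)
  rcases hpre.subset_or_subset hU hU2 hdisj hsub with hin | hin
  · have hxU : ∀ t ∈ Icc (0:ℝ) 1, x t ∈ U := fun t ht => hin ⟨t, ht, rfl⟩
    set y : ℝ → V := fun t => ψ (x t) with hy
    have hyd : ∀ t ∈ Icc (0:ℝ) 1, HasDerivAt y (l (‖y t‖^2) • P.J (y t)) t := by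
      intro t ht
      have hd : HasDerivAt y (fderiv ℝ ψ (x t) (P.J (P.dH (x t)))) t :=
        (hψ _ (hxU t ht)).hasFDerivAt.comp_hasDerivAt t (hx t ht)
      set y' := fderiv ℝ ψ (x t) (P.J (P.dH (x t)))
      have hd2 : HasDerivAt (fun t => φ (y t)) (D (x t) y') t :=
        (hφ _ (hxU t ht)).comp_hasDerivAt t hd
      have hev : (fun t => φ (y t)) =ᶠ[nhds t] x := by
        filter_upwards [(hx t ht).continuousAt.preimage_mem_nhds (hU.mem_nhds (hxU t ht))] with s hs
        exact hφψ _ hs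
      have hd3 := hd2.unique ((hx t ht).congr_of_eventuallyEq hev)
      have : y' = l (‖y t‖^2) • P.J (y t) := by
        refine ext_inner_right ℝ fun v => ?_
        have e1 := hsym _ (hxU t ht) y' (P.J v)
        rw [hd3, P.J_sq, inner_neg_left, hH _ (hxU t ht)] at e1
        rw [inner_smul_left, P.J_skew (y t) v]
        rw [P.J_skew y' (P.J v), P.J_sq, inner_neg_right, neg_neg] at e1
        rw [← e1]
        simp [hy]
      rwa [this] at hd
    have hJ0 : ∀ v, inner ℝ v (P.J v) = (0:ℝ) := by
      intro v
      have := P.J_skew v v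
      rw [real_inner_comm] at this; linarith
    have hn : ∀ t ∈ Icc (0:ℝ) 1, ‖y t‖^2 = ‖y 0‖^2 := by
      refine nsq_cst_of_deriv (fun t => ‖y t‖^2) fun t ht => ?_
      have := (hyd t ht).norm_sq
      rwa [inner_smul_right, hJ0, mul_zero, mul_zero] at this
    set lam := l (‖y 0‖^2) with hlam
    have hyd2 : ∀ t ∈ Icc (0:ℝ) 1, HasDerivAt y (lam • P.J (y t)) t := by
      intro t ht
      have := hyd t ht
      rwa [hn t ht] at this
    have hw : ∀ t ∈ Icc (0:ℝ) 1, HasDerivAt (fun t => nsqRot P.J (-(lam * t)) (y t)) 0 t := by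
      intro t ht
      have h1 : HasDerivAt (fun t : ℝ => -(lam * t)) (-lam) t := by
        simpa using ((hasDerivAt_id t).const_mul lam).fun_neg
      have := (h1.cos.smul (hyd2 t ht)).add
        (h1.sin.smul (P.J.hasFDerivAt.comp_hasDerivAt t (hyd2 t ht)))
      convert! this using 1
      simp only [map_smul, P.J_sq, Function.comp]
      module
    have hw1 := nsq_cst_of_deriv _ hw 1 (by simp)
    have hy10 : y 1 = y 0 := by simp only [hy, hx01]
    simp only [mul_one, mul_zero, neg_zero, nsqRot_zero, hy10] at hw1
    have hc : (Real.cos lam - 1) * ‖y 0‖^2 = 0 := by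
      have := congrArg (fun v => inner ℝ (y 0) v) hw1
      simp only [nsqRot, Real.cos_neg, Real.sin_neg, inner_add_right, inner_smul_right, hJ0,
        mul_zero, add_zero, real_inner_self_eq_norm_sq] at this
      linarith
    have h00 : lam • y 0 = 0 := by
      rcases mul_eq_zero.1 hc with h | h
      · have h3 : Real.cos lam = 1 := by linarith
        have h4 := (Real.cos_eq_one_iff_of_lt_of_lt (by have := hl0 (‖y 0‖^2); linarith [Real.pi_pos])
          (hl1 _)).1 h3
        rw [hlam, h4, zero_smul]
      · have : y 0 = 0 := by simpa using h
        rw [this, smul_zero]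
    refine hne 0 (by simp) ?_
    obtain ⟨v, hv⟩ := hsurj _ (hxU 0 (by simp)) (P.dH (x 0))
    have h5 := hH _ (hxU 0 (by simp)) v
    rw [hv] at h5
    have h6 : l (‖ψ (x 0)‖^2) * inner ℝ (ψ (x 0)) v = inner ℝ (lam • y 0) v := by
      rw [inner_smul_left]; simp [hlam, hy]
    rw [h6, h00, inner_zero_left] at h5
    exact inner_self_eq_zero.1 h5
  · refine absurd hpos (not_lt.2 (hint _ fun t ht => ?_))
    have := h2 _ (hin ⟨t, ht, rfl⟩)
    linarith

end NsqB3

end NsqPartB3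

section NsqPartB4
open MeasureTheory

noncomputable section NsqB4

theorem nsq_prim (b : ℝ → ℝ) (hb : ContDiff ℝ 2 b) (a : ℝ) :
    (∀ s, HasDerivAt (fun s => ∫ t in a..s, b t) (b s) s) ∧
    ContDiff ℝ 2 (fun s => ∫ t in a..s, b t) := by
  have h1 : ∀ s, HasDerivAt (fun s => ∫ t in a..s, b t) (b s) s := fun s =>
    intervalIntegral.integral_hasDerivAt_right (hb.continuous.intervalIntegrable _ _)
      (hb.continuous.stronglyMeasurableAtFilter _ _) hb.continuous.continuousAt
  refine ⟨h1, ?_⟩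
  have hd : deriv (fun s => ∫ t in a..s, b t) = b := funext fun s => (h1 s).deriv
  have : ContDiff ℝ (1+1) (fun s => ∫ t in a..s, b t) := by
    rw [contDiff_succ_iff_deriv]
    refine ⟨fun s => (h1 s).differentiableAt, by simp, ?_⟩
    rw [hd]; exact hb.of_le (by norm_num)
  simpa [one_add_one_eq_two] using this

theorem nsq_hfun {a S : ℝ} (ha : 0 < a) (hS : a < S) : ∃ (h h' : ℝ → ℝ) (m ε s0 : ℝ),
    ContDiff ℝ 2 h ∧ (∀ s, HasDerivAt h (h' s) s) ∧ (∀ s, 0 ≤ h' s) ∧ (∀ s, h' s < Real.pi) ∧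
    0 < ε ∧ ε < s0 ∧ s0 < S ∧ (∀ s ≤ ε, h s = 0) ∧ (∀ s, s0 ≤ s → h s = m) ∧
    (∀ s, 0 ≤ h s) ∧ (∀ s, h s ≤ m) ∧ Real.pi * a < m := by
  have hpi := Real.pi_pos
  have hS0 : 0 < S := ha.trans hS
  have hSa : S + a ≠ 0 := by positivity
  let b : ContDiffBump (S/2) := ⟨(S+a)/4, (3*S+a)/8, by linarith, by linarith⟩
  set κ : ℝ := Real.pi * (a + (S+a)/2) / (S+a) with hκ
  have hκ0 : 0 < κ := by positivity
  have hκ1 : κ < Real.pi := by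
    rw [hκ, div_lt_iff₀ (by linarith)]
    exact mul_lt_mul_of_pos_left (by linarith) hpi
  have hbc : ContDiff ℝ 2 (b : ℝ → ℝ) := b.contDiff
  obtain ⟨hd, hc⟩ := nsq_prim b hbc 0
  set F : ℝ → ℝ := fun s => ∫ t in (0:ℝ)..s, b t with hF
  have hmon : Monotone F := monotone_of_hasDerivAt_nonneg hd (fun s => b.nonneg)
  have hz : ∀ s, s ≤ S/2 - (3*S+a)/8 → b s = 0 := fun s hs => by
    apply b.zero_of_le_dist
    rw [Real.dist_eq, abs_sub_comm]
    exact le_trans (by show (3*S+a)/8 ≤ _; linarith) (le_abs_self _)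
  have hz2 : ∀ s, S/2 + (3*S+a)/8 ≤ s → b s = 0 := fun s hs => by
    apply b.zero_of_le_dist
    rw [Real.dist_eq]
    exact le_trans (by show (3*S+a)/8 ≤ _; linarith) (le_abs_self _)
  have hF0 : ∀ s, s ≤ S/2 - (3*S+a)/8 → F s = 0 := fun s hs => by
    simp only [hF]
    rw [intervalIntegral.integral_congr (g := fun _ => (0:ℝ)), intervalIntegral.integral_zero]
    intro t ht
    apply hz
    rcases le_total 0 s with h | h
    · rw [uIcc_of_le h] at ht; exact ht.2.trans hs
    · rw [uIcc_of_ge h] at ht; linarith [ht.2]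
  have hFm : ∀ s, S/2 + (3*S+a)/8 ≤ s → F s = F (S/2 + (3*S+a)/8) := fun s hs => by
    have : F s - F (S/2 + (3*S+a)/8) = 0 := by
      simp only [hF]
      rw [intervalIntegral.integral_interval_sub_left (hbc.continuous.intervalIntegrable _ _)
        (hbc.continuous.intervalIntegrable _ _),
        intervalIntegral.integral_congr (g := fun _ => (0:ℝ)), intervalIntegral.integral_zero]
      intro t ht
      rw [uIcc_of_le hs] at ht
      exact hz2 _ ht.1
    linarith
  have hFin : F (S/2 + (S+a)/4) - F (S/2 - (S+a)/4) = (S+a)/2 := by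
    simp only [hF]
    rw [intervalIntegral.integral_interval_sub_left (hbc.continuous.intervalIntegrable _ _)
        (hbc.continuous.intervalIntegrable _ _),
        intervalIntegral.integral_congr (g := fun _ => (1:ℝ)), intervalIntegral.integral_const]
    · simp; ring
    intro t ht
    rw [uIcc_of_le (by linarith)] at ht
    apply b.one_of_mem_closedBall
    rw [mem_closedBall, Real.dist_eq, abs_le]
    constructor
    · show -((S+a)/4) ≤ _; linarith [ht.1]
    · show _ ≤ ((S+a)/4); linarith [ht.2]
  have hFnn : ∀ s, 0 ≤ F s := fun s => by
    rcases le_total s (S/2 - (3*S+a)/8) with h | h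
    · rw [hF0 s h]
    · have := hmon h; rwa [hF0 _ le_rfl] at this
  have hFle : ∀ s, F s ≤ F (S/2 + (3*S+a)/8) := fun s => by
    rcases le_total s (S/2 + (3*S+a)/8) with h | h
    · exact hmon h
    · rw [hFm s h]
  refine ⟨fun s => κ * F s, fun s => κ * b s, κ * F (S/2 + (3*S+a)/8), S/2 - (3*S+a)/8,
    S/2 + (3*S+a)/8, contDiff_const.mul hc, fun s => (hd s).const_mul κ,
    fun s => mul_nonneg hκ0.le b.nonneg, fun s => ?_, by linarith, by linarith, by linarith,
    fun s hs => by simp [hF0 s hs], fun s hs => by simp [hFm s hs],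
    fun s => mul_nonneg hκ0.le (hFnn s), fun s => mul_le_mul_of_nonneg_left (hFle s) hκ0.le, ?_⟩
  · have : b s ≤ 1 := b.le_one
    nlinarith
  · have h1 : (S+a)/2 ≤ F (S/2 + (3*S+a)/8) := by
      have := hFle (S/2 + (S+a)/4)
      have := hFnn (S/2 - (S+a)/4)
      linarith
    have h2 : Real.pi * a < κ * ((S+a)/2) := by
      have : κ * ((S+a)/2) = Real.pi * (a + (S+a)/2) / 2 := by
        rw [hκ]; field_simp
      rw [this]; nlinarith
    exact h2.trans_le (mul_le_mul_of_nonneg_left h1 hκ0.le)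

theorem nsq_ffun {a m : ℝ} (ha : 0 < a) (hm : Real.pi * a < m) : ∃ (f f' : ℝ → ℝ) (κ s1 c : ℝ),
    ContDiff ℝ 2 f ∧ (∀ s, HasDerivAt f (f' s) s) ∧ Real.pi < κ ∧ κ < 2 * Real.pi ∧
    (∀ s ≤ a, f s = m) ∧ (∀ s ≤ a, f' s = 0) ∧ (∀ s, m ≤ f s) ∧ (∀ s, 0 ≤ s → s * f' s ≤ f s) ∧
    (∀ s, s1 ≤ s → f s = κ * s + c) := by
  have hpi := Real.pi_pos
  obtain ⟨κ, hκ1, hκ2⟩ : ∃ κ, Real.pi < κ ∧ κ < min (2 * Real.pi) (m / a) :=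
    exists_between (lt_min (by linarith) (by rwa [lt_div_iff₀ ha]))
  have hκ3 : κ * a < m := by
    have := hκ2.trans_le (min_le_right _ _)
    rwa [lt_div_iff₀ ha] at this
  have hκ0 : 0 < κ := hpi.trans hκ1
  set s1 := m / κ with hs1
  have hs1m : s1 * κ = m := by rw [hs1]; field_simp
  have has1 : a < s1 := by rw [hs1, lt_div_iff₀ hκ0]; linarith
  set χ : ℝ → ℝ := fun s => Real.smoothTransition ((s - a) / (s1 - a)) with hχ
  have hχc : ContDiff ℝ 2 χ := Real.smoothTransition.contDiff.comp
    ((contDiff_id.sub contDiff_const).div_const _)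
  obtain ⟨hd, hc⟩ := nsq_prim χ hχc a
  set F : ℝ → ℝ := fun s => ∫ t in a..s, χ t with hF
  have hχ0 : ∀ s, 0 ≤ χ s := fun s => Real.smoothTransition.nonneg _
  have hχ1 : ∀ s, χ s ≤ 1 := fun s => Real.smoothTransition.le_one _
  have hmon : Monotone F := monotone_of_hasDerivAt_nonneg hd hχ0
  have hz : ∀ s ≤ a, χ s = 0 := fun s hs =>
    Real.smoothTransition.zero_of_nonpos (div_nonpos_of_nonpos_of_nonneg (by linarith) (by linarith))
  have ho : ∀ s, s1 ≤ s → χ s = 1 := fun s hs =>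
    Real.smoothTransition.one_of_one_le (by rw [one_le_div (by linarith)]; linarith)
  have hF0 : ∀ s ≤ a, F s = 0 := fun s hs => by
    simp only [hF]
    rw [intervalIntegral.integral_congr (g := fun _ => (0:ℝ)), intervalIntegral.integral_zero]
    intro t ht
    rw [uIcc_of_ge hs] at ht; exact hz _ ht.2
  have hFnn : ∀ s, 0 ≤ F s := fun s => by
    rcases le_total s a with h | h
    · rw [hF0 s h]
    · have := hmon h; rwa [hF0 _ le_rfl] at this
  have hF1 : ∀ s, s1 ≤ s → F s = F s1 + (s - s1) := fun s hs => by
    have : F s - F s1 = s - s1 := by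
      simp only [hF]
      rw [intervalIntegral.integral_interval_sub_left (hχc.continuous.intervalIntegrable _ _)
        (hχc.continuous.intervalIntegrable _ _),
        intervalIntegral.integral_congr (g := fun _ => (1:ℝ)), intervalIntegral.integral_const]
      · simp
      intro t ht
      rw [uIcc_of_le hs] at ht
      exact ho _ ht.1
    linarith
  have hm0 : 0 < m := by nlinarith
  refine ⟨fun s => m + κ * F s, fun s => κ * χ s, κ, s1, m + κ * F s1 - κ * s1,
    contDiff_const.add (contDiff_const.mul hc), fun s => ((hd s).const_mul κ).const_add m, hκ1,
    hκ2.trans_le (min_le_left _ _), fun s hs => by simp [hF0 s hs], fun s hs => by simp [hz s hs],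
    fun s => by have := mul_nonneg hκ0.le (hFnn s); simpa using this, fun s hs => ?_,
    fun s hs => by simp only [hF1 s hs]; ring⟩
  have h1 := mul_nonneg hκ0.le (hFnn s)
  rcases le_total s s1 with h | h
  · have : s * (κ * χ s) ≤ s1 * (κ * 1) := by
      have h5 : κ * χ s ≤ κ * 1 := mul_le_mul_of_nonneg_left (hχ1 s) hκ0.le
      exact mul_le_mul h h5 (mul_nonneg hκ0.le (hχ0 s)) (by linarith)
    simp only
    nlinarith
  · simp only [ho s h, hF1 s h]
    have := mul_nonneg hκ0.le (hFnn s1)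
    nlinarith

/-- scalar gap -/
theorem nsq_gap1 {a : ℝ} {j : ℤ} (h1 : 2 * Real.pi * j < a) (h2 : a < 2 * Real.pi * (j + 1)) :
    ∃ γ, 0 < γ ∧ ∀ k : ℤ, γ * (1 + |(k:ℝ)|) ≤ |2 * Real.pi * k - a| := by
  have hpi := Real.pi_gt_three
  set μ := min (a - 2 * Real.pi * j) (2 * Real.pi * (j + 1) - a) with hμ
  have hμ0 : 0 < μ := lt_min (by linarith) (by linarith)
  have hk : ∀ k : ℤ, μ ≤ |2 * Real.pi * k - a| := fun k => by
    rcases le_or_gt k j with h | h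
    · have : (k:ℝ) ≤ j := by exact_mod_cast h
      rw [abs_sub_comm]
      refine le_trans ?_ (le_abs_self _)
      refine (min_le_left _ _).trans ?_
      nlinarith
    · have : (j:ℝ) + 1 ≤ k := by exact_mod_cast h
      refine le_trans ?_ (le_abs_self _)
      refine (min_le_right _ _).trans ?_
      nlinarith
  refine ⟨1 / ((1 + |a|)/μ + 1), by positivity, fun k => ?_⟩
  rw [div_mul_eq_mul_div, one_mul, div_le_iff₀ (by positivity)]
  have h3 : |(k:ℝ)| ≤ |2 * Real.pi * k - a| + |a| := by
    have : |2 * Real.pi * k| ≤ |2 * Real.pi * k - a| + |a| := by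
      have := abs_add_le (2 * Real.pi * k - a) a
      simpa using this
    rw [abs_mul, abs_of_pos Real.two_pi_pos] at this
    nlinarith [abs_nonneg (k:ℝ)]
  have h4 : 1 + |a| ≤ |2 * Real.pi * k - a| * ((1 + |a|)/μ) := by
    have : μ * ((1 + |a|)/μ) = 1 + |a| := by field_simp
    exact this.symm.le.trans (mul_le_mul_of_nonneg_right (hk k) (by positivity))
  nlinarith

end NsqB4

end NsqPartB4

section NsqPartB5
open MeasureTheory

noncomputable section NsqB5

variable {V : Type*} [NormedAddCommGroup V] [InnerProductSpace ℝ V] [FiniteDimensional ℝ V]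

theorem nsq_grad (g : V → ℝ) (hg : ContDiff ℝ 2 g) (K : Set V) (hK : IsCompact K) (c : ℝ)
    (hgK : ∀ x, x ∉ K → g x = c) : ∃ (G : V → V) (M : ℝ) (L : NNReal),
    (∀ x, HasGradientAt g (G x) x) ∧ (∀ x, |g x| ≤ M) ∧ (∀ x, ‖G x‖ ≤ M) ∧ LipschitzWith L G := by
  have hcs : HasCompactSupport (fun x => g x - c) :=
    HasCompactSupport.intro hK (fun x hx => by simp [hgK x hx])
  have hgc : ContDiff ℝ 2 (fun x => g x - c) := hg.sub contDiff_const
  obtain ⟨M1, hM1⟩ := hcs.exists_bound_of_continuous hgc.continuous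
  set T := ((InnerProductSpace.toDual ℝ V).symm.toContinuousLinearEquiv :
    StrongDual ℝ V ≃L[ℝ] V) with hT
  set G : V → V := fun x => T (fderiv ℝ (fun x => g x - c) x) with hG
  have hGc : ContDiff ℝ 1 G := T.contDiff.comp (hgc.fderiv_right (by norm_num))
  have hGs : HasCompactSupport G := (hcs.fderiv (𝕜 := ℝ)).comp_left (g := T) (map_zero T)
  obtain ⟨M2, hM2⟩ := hGs.exists_bound_of_continuous hGc.continuous
  obtain ⟨L, hL⟩ := hGc.lipschitzWith_of_hasCompactSupport hGs (by norm_num)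
  refine ⟨G, max (M1 + |c|) M2, L, fun x => ?_, fun x => ?_, fun x => ?_, hL⟩
  · have h1 : HasFDerivAt (fun x => g x - c) (fderiv ℝ (fun x => g x - c) x) x :=
      (hgc.differentiable (by norm_num) x).hasFDerivAt
    have h2 := h1.add_const c
    simp only [sub_add_cancel] at h2
    exact h2.hasGradientAt
  · refine le_trans ?_ (le_max_left _ _)
    have := hM1 x
    rw [Real.norm_eq_abs] at this
    have h3 := abs_add_le (g x - c) c
    simp only [sub_add_cancel] at h3
    linarith
  · exact (hM2 x).trans (le_max_right _ _)

theorem nsq_inv (J : V →L[ℝ] V) (hJ : ∀ x, J (J x) = -x) (R : ℝ) (φ : V → V)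
    (hφ : ContDiffOn ℝ 2 φ (ball 0 R)) (hinj : InjOn φ (ball 0 R))
    (hsym : ∀ x ∈ ball (0:V) R, ∀ u v,
      inner ℝ (J (fderiv ℝ φ x u)) (fderiv ℝ φ x v) = inner ℝ (J u) v) :
    ∃ ψ : V → V, IsOpen (φ '' ball 0 R) ∧ (∀ x ∈ ball (0:V) R, ψ (φ x) = x) ∧
      (∀ x ∈ ball (0:V) R, ContDiffAt ℝ 2 ψ (φ x)) ∧
      (∀ x ∈ ball (0:V) R, Function.Surjective (fderiv ℝ φ x)) ∧
      (∀ x ∈ ball (0:V) R, HasFDerivAt φ (fderiv ℝ φ x) x) := by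
  have hca : ∀ x ∈ ball (0:V) R, ContDiffAt ℝ 2 φ x := fun x hx =>
    hφ.contDiffAt (isOpen_ball.mem_nhds hx)
  have hi : ∀ x ∈ ball (0:V) R, Function.Injective (fderiv ℝ φ x) := fun x hx => by
    rw [injective_iff_map_eq_zero]
    intro u hu
    have h1 : J u = 0 := by
      apply ext_inner_right ℝ
      intro v
      rw [← hsym x hx, hu]; simp
    have := hJ u
    rw [h1, map_zero] at this
    exact neg_eq_zero.1 this.symm
  have hequiv : ∀ x ∈ ball (0:V) R, ∃ E : V ≃L[ℝ] V, (E : V →L[ℝ] V) = fderiv ℝ φ x :=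
    fun x hx => ⟨(LinearEquiv.ofInjectiveEndo (fderiv ℝ φ x : V →ₗ[ℝ] V)
      (hi x hx)).toContinuousLinearEquiv, by ext v; rfl⟩
  have hfd : ∀ x ∈ ball (0:V) R, HasFDerivAt φ (fderiv ℝ φ x) x := fun x hx =>
    ((hca x hx).differentiableAt (by norm_num)).hasFDerivAt
  have hleft : ∀ x ∈ ball (0:V) R, Function.invFunOn φ (ball 0 R) (φ x) = x := fun x hx =>
    hinj.leftInvOn_invFunOn hx
  refine ⟨Function.invFunOn φ (ball 0 R), ?_, hleft, ?_, ?_, hfd⟩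
  · rw [isOpen_iff_mem_nhds]
    rintro _ ⟨x, hx, rfl⟩
    obtain ⟨E, hE⟩ := hequiv x hx
    have hs : HasStrictFDerivAt φ (E : V →L[ℝ] V) x := by
      rw [hE]; exact (hca x hx).hasStrictFDerivAt (by norm_num)
    rw [← hs.map_nhds_eq_of_equiv]
    exact Filter.image_mem_map (isOpen_ball.mem_nhds hx)
  · intro x hx
    obtain ⟨E, hE⟩ := hequiv x hx
    have hE' : HasFDerivAt φ (E : V →L[ℝ] V) x := by rw [hE]; exact hfd x hx
    have hs := (hca x hx).hasStrictFDerivAt' hE' (by norm_num)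
    have h1 := (hca x hx).to_localInverse hE' (by norm_num)
    refine h1.congr_of_eventuallyEq ?_
    have h2 : (hca x hx).localInverse hE' (by norm_num) (φ x) = x :=
      (hca x hx).localInverse_apply_image hE' (by norm_num)
    have h3 : ∀ᶠ y in nhds (φ x), φ ((hca x hx).localInverse hE' (by norm_num) y) = y :=
      hs.eventually_right_inverse
    have h4 := h1.continuousAt.eventually (p := fun y => y ∈ ball (0:V) R)
      (by rw [h2]; exact isOpen_ball.mem_nhds hx)
    filter_upwards [h3, h4] with y hy3 hy4
    conv_lhs => rw [← hy3]
    exact hleft _ hy4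
  · intro x hx
    obtain ⟨E, hE⟩ := hequiv x hx
    rw [← hE]
    exact E.surjective

end NsqB5

end NsqPartB5

section NsqPartB6
open MeasureTheory

noncomputable section NsqB6

variable {V : Type*} [NormedAddCommGroup V] [InnerProductSpace ℝ V] [FiniteDimensional ℝ V]

theorem nsq_abs (J : V →L[ℝ] V) (hJ : ∀ x, J (J x) = -x)
    (hJs : ∀ x y, inner ℝ (J x) y = - inner ℝ x (J y))
    (B : V →L[ℝ] V) (hBs : ∀ x y, inner ℝ (B x) y = inner ℝ x (B y))
    (hBJ : ∀ x, B (J x) = J (B x)) (δ : ℝ) (hδ : 0 < δ) (hB : ∀ x, δ * ‖x‖^2 ≤ inner ℝ (B x) x)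
    (e : V) (he : ‖e‖ = 1) (hBe : B e = e)
    (hgap : ∀ κ, Real.pi < κ → κ < 2 * Real.pi → ∃ γ, 0 < γ ∧ ∀ (k : ℤ) (v : V),
      γ * (1 + |(k:ℝ)|) * ‖v‖ ≤ ‖(2 * Real.pi * (k:ℝ)) • v - (2 * κ) • B v‖)
    (R a : ℝ) (hR : 0 < R) (ha : 0 < a) (haR : a < R^2) (φ : V → V)
    (hφ : ContDiffOn ℝ 2 φ (ball 0 R)) (hinj : InjOn φ (ball 0 R))
    (hq : ∀ x ∈ ball (0:V) R, inner ℝ (B (φ x)) (φ x) ≤ a)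
    (hsym : ∀ x ∈ ball (0:V) R, ∀ u v,
      inner ℝ (J (fderiv ℝ φ x u)) (fderiv ℝ φ x v) = inner ℝ (J u) v) : False := by
  classical
  obtain ⟨ψ, hUo, hψφ, hψc, hsurj, hfd⟩ := nsq_inv J hJ R φ hφ hinj hsym
  obtain ⟨h, h', m, ε, s0, hhc, hhd, hh0, hhpi, hε, hεs, hsS, hhε, hhm, hhnn, hhle, hm⟩ :=
    nsq_hfun ha haR
  obtain ⟨f, f', κ, s1, c, hfc, hfd', hκ1, hκ2, hfa, hf'a, hfm, hff, hfs⟩ := nsq_ffun ha hm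
  obtain ⟨γ, hγ, hgap⟩ := hgap κ hκ1 hκ2
  have hpi := Real.pi_pos
  have hm0 : 0 < m := lt_trans (by positivity) hm
  set U := φ '' ball (0:V) R with hU
  set q : V → ℝ := fun z => inner ℝ (B z) z with hqdef
  have hqc : ContDiff ℝ 2 q := B.contDiff.inner ℝ contDiff_id
  have hqd : ∀ z, HasFDerivAt q ((2:ℝ) • innerSL ℝ (B z)) z := fun z => by
    have := (B.hasFDerivAt (x := z)).inner ℝ (hasFDerivAt_id z)
    convert! this using 1
    ext v
    have h3 := hBs v z
    simp only [innerSL_apply_apply, _root_.smul_apply,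
      ContinuousLinearMap.comp_apply, ContinuousLinearMap.prod_apply,
      fderivInnerCLM_apply, smul_eq_mul, ContinuousLinearMap.id_apply, id]
    rw [h3, real_inner_comm (B z) v]; ring
  have hq0 : ∀ z, 0 ≤ q z := fun z => le_trans (by positivity) (hB z)
  have hUq : ∀ z ∈ U, q z ≤ a := by rintro _ ⟨x, hx, rfl⟩; exact hq x hx
  -- inner Hamiltonian
  set Hi : V → ℝ := fun z => if z ∈ U then h (‖ψ z‖^2) - m else 0 with hHi
  have hHiU : ∀ z ∈ U, Hi z = h (‖ψ z‖^2) - m := fun z hz => if_pos hz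
  have hHiN : ∀ z, z ∉ U → Hi z = 0 := fun z hz => if_neg hz
  set ρ1 := Real.sqrt s0 with hρ1
  have hs00 : 0 < s0 := hε.trans hεs
  have hρ1R : ρ1 < R := by rw [hρ1, Real.sqrt_lt' hR]; exact hsS
  have hρsub : closedBall (0:V) ρ1 ⊆ ball 0 R := closedBall_subset_ball hρ1R
  set K := φ '' closedBall (0:V) ρ1 with hK
  have hKc : IsCompact K := (isCompact_closedBall 0 ρ1).image_of_continuousOn
    (hφ.continuousOn.mono hρsub)
  have hKU : K ⊆ U := image_mono hρsub
  have hHiK : ∀ z, z ∉ K → Hi z = 0 := fun z hz => by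
    by_cases hzU : z ∈ U
    · rw [hHiU z hzU]
      obtain ⟨x, hx, rfl⟩ := hzU
      rw [hψφ x hx, hhm, sub_self]
      by_contra hlt
      refine hz ⟨x, ?_, rfl⟩
      rw [mem_closedBall_zero_iff, hρ1]
      exact Real.le_sqrt_of_sq_le (not_le.1 hlt).le
    · exact hHiN z hzU
  have hHic : ContDiff ℝ 2 Hi := by
    rw [contDiff_iff_contDiffAt]
    intro z
    by_cases hzU : z ∈ U
    · have h1 : ContDiffAt ℝ 2 (fun z => h (‖ψ z‖^2) - m) z := by
        obtain ⟨x, hx, rfl⟩ := hzU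
        have h2 : ContDiffAt ℝ 2 (fun z => ‖ψ z‖^2) (φ x) := (hψc x hx).norm_sq ℝ
        exact (hhc.contDiffAt.comp (φ x) h2).sub contDiffAt_const
      refine h1.congr_of_eventuallyEq ?_
      filter_upwards [hUo.mem_nhds hzU] with y hy using hHiU y hy
    · refine (contDiffAt_const (c := (0:ℝ))).congr_of_eventuallyEq ?_
      filter_upwards [hKc.isClosed.isOpen_compl.mem_nhds (fun hzK => hzU (hKU hzK))] with y hy
        using hHiK y hy
  set g : V → ℝ := fun z => Hi z + f (q z) - κ * q z with hg
  have hgc : ContDiff ℝ 2 g := (hHic.add (hfc.comp hqc)).sub (contDiff_const.mul hqc)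
  have hq2 : IsCompact {z : V | q z ≤ s1} := by
    refine (isCompact_closedBall (0:V) (Real.sqrt (s1/δ))).of_isClosed_subset
      (isClosed_le hqc.continuous continuous_const) ?_
    intro z hz
    rw [mem_closedBall_zero_iff]
    apply Real.le_sqrt_of_sq_le
    rw [le_div_iff₀ hδ]
    have := hB z
    have h2 : q z ≤ s1 := hz
    simp only [hqdef] at h2
    linarith
  obtain ⟨G, M, L, hG, hgM, hGM, hGL⟩ := nsq_grad g hgc (K ∪ {z : V | q z ≤ s1}) (hKc.union hq2) c
    (fun z hz => by
      rw [mem_union, not_or] at hz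
      have h1 : s1 ≤ q z := le_of_lt (not_le.1 hz.2)
      simp only [hg, hHiK z hz.1, hfs _ h1]; ring)
  set H : V → ℝ := fun z => Hi z + f (q z) with hH
  have hHg : ∀ z, 1/2 * inner ℝ (((2*κ) • B) z) z + g z = H z := fun z => by
    simp only [hg, hH, hqdef, _root_.smul_apply, inner_smul_left]
    simp; ring
  have hHU : ∀ z ∈ U, H z = h (‖ψ z‖^2) := fun z hz => by
    simp only [hH, hHiU z hz, hfa _ (hUq z hz)]; ring
  have hHN : ∀ z, z ∉ U → H z = f (q z) := fun z hz => by
    simp only [hH, hHiN z hz, zero_add]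
  have h0R : (0:V) ∈ ball (0:V) R := mem_ball_self hR
  have hc0U : φ 0 ∈ U := ⟨0, h0R, rfl⟩
  obtain ⟨ρ, hρ, hρH⟩ : ∃ ρ, 0 < ρ ∧ ∀ z, ‖z‖ ≤ ρ → H (φ 0 + z) = 0 := by
    have h1 : ∀ᶠ y in nhds (φ 0), H y = 0 := by
      have h2 : ContinuousAt (fun z => ‖ψ z‖^2) (φ 0) := (hψc 0 h0R).continuousAt.norm.pow 2
      have h3 : ∀ᶠ y in nhds (φ 0), ‖ψ y‖^2 < ε := by
        apply h2.eventually_lt continuousAt_const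
        rw [hψφ 0 h0R]; simpa using hε
      filter_upwards [h3, hUo.mem_nhds hc0U] with y hy1 hy2
      rw [hHU y hy2, hhε _ hy1.le]
    obtain ⟨η, hη, hηH⟩ := Metric.eventually_nhds_iff.1 h1
    refine ⟨η/2, by linarith, fun z hz => hηH ?_⟩
    rw [dist_eq_norm, add_sub_cancel_left]; linarith
  have hHnn : ∀ z, 0 ≤ H z := fun z => by
    by_cases hz : z ∈ U
    · rw [hHU z hz]; exact hhnn _
    · rw [hHN z hz]; exact hm0.le.trans (hfm _)
  have hM0 : 0 ≤ M := (abs_nonneg _).trans (hgM 0)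
  have hHquad : ∀ z, H (φ 0 + z) ≤ ((M + 2 * κ * ‖B‖ * ‖φ 0‖^2)/ρ^2 + 2 * κ * ‖B‖) * ‖z‖^2 := by
    have hκ0 : 0 < κ := hpi.trans hκ1
    intro z
    rcases le_total ‖z‖ ρ with hz | hz
    · rw [hρH z hz]; positivity
    · have h1 : q (φ 0 + z) ≤ ‖B‖ * ‖φ 0 + z‖^2 := by
        refine (real_inner_le_norm _ _).trans ?_
        have := mul_le_mul_of_nonneg_right (B.le_opNorm (φ 0 + z)) (norm_nonneg (φ 0 + z))
        linarith
      have h2 : ‖φ 0 + z‖^2 ≤ 2 * (‖φ 0‖^2 + ‖z‖^2) := by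
        have h3 : ‖φ 0 + z‖^2 ≤ (‖φ 0‖ + ‖z‖)^2 := by gcongr; exact norm_add_le _ _
        nlinarith [sq_nonneg (‖φ 0‖ - ‖z‖)]
      have h3 : H (φ 0 + z) ≤ M + κ * q (φ 0 + z) := by
        have := (le_abs_self _).trans (hgM (φ 0 + z))
        simp only [hg] at this
        simp only [hH]; linarith
      have h4 : κ * q (φ 0 + z) ≤ κ * (‖B‖ * (2 * (‖φ 0‖^2 + ‖z‖^2))) := by
        refine mul_le_mul_of_nonneg_left (h1.trans ?_) hκ0.le
        exact mul_le_mul_of_nonneg_left h2 (norm_nonneg _)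
      have h5 : M + 2 * κ * ‖B‖ * ‖φ 0‖^2 ≤ (M + 2 * κ * ‖B‖ * ‖φ 0‖^2)/ρ^2 * ‖z‖^2 := by
        rw [div_mul_eq_mul_div, le_div_iff₀ (by positivity)]
        refine mul_le_mul_of_nonneg_left ?_ (by positivity)
        gcongr
      nlinarith
  let P : NsqData V :=
    { J := J, J_sq := hJ, J_skew := hJs, A := (2*κ) • B
      A_symm := fun x y => by simp [inner_smul_left, inner_smul_right, hBs]
      A_comm := fun x => by simp [hBJ]
      a0 := 2 * κ * δ, a0_pos := by have := hpi.trans hκ1; positivity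
      A_pos := fun x => by
        have h1 := mul_le_mul_of_nonneg_left (hB x) (show 0 ≤ 2 * κ by linarith)
        simp only [_root_.smul_apply, inner_smul_left]
        simp only [conj_trivial]; linarith
      e := e, e_norm := he, a1 := 2 * κ
      A_e := by simp [hBe]
      a1_gt := by linarith
      γ := γ, γ_pos := hγ, gap := fun k v => by simpa using hgap k v
      g := g, G := G, grad := hG, M := M, g_bd := hgM, G_bd := hGM, L := L, G_lip := hGL
      H_nonneg := fun x => by rw [hHg]; exact hHnn x
      c0 := φ 0, ρ := ρ, ρ_pos := hρ
      H_zero := fun z hz => by rw [hHg]; exact hρH z hz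
      Q := (M + 2 * κ * ‖B‖ * ‖φ 0‖^2)/ρ^2 + 2 * κ * ‖B‖
      H_quad := fun z => by rw [hHg]; exact hHquad z }
  have hPH : P.H = H := funext fun z => hHg z
  have hPd : ∀ z, HasFDerivAt H (innerSL ℝ (P.dH z)) z := fun z => by
    rw [← hPH]; exact P.H_hasFDerivAt z
  have hfq : ∀ z, HasFDerivAt (fun z => f (q z)) (f' (q z) • ((2:ℝ) • innerSL ℝ (B z))) z :=
    fun z => (hfd' (q z)).comp_hasFDerivAt z (hqd z)
  have hdN : ∀ z, z ∉ K → P.dH z = (2 * f' (q z)) • B z := fun z hz => by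
    have h1 : HasFDerivAt H (f' (q z) • ((2:ℝ) • innerSL ℝ (B z))) z := by
      refine (hfq z).congr_of_eventuallyEq ?_
      filter_upwards [hKc.isClosed.isOpen_compl.mem_nhds hz] with y hy
      simp only [hH, hHiK y hy, zero_add]
    have h2 := (hPd z).unique h1
    apply ext_inner_right ℝ
    intro v
    have h3 := congrArg (fun l : V →L[ℝ] ℝ => l v) h2
    simp only [innerSL_apply_apply, _root_.smul_apply, smul_eq_mul] at h3
    rw [h3, inner_smul_left]; simp; ring
  refine nsq_contra P U {z | a < q z} hUo (isOpen_lt continuous_const hqc.continuous) ?_ ?_ ?_ φ ψ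
    ?_ ?_ (fun z => fderiv ℝ φ (ψ z)) ?_ ?_ ?_ (fun s => 2 * h' s) ?_ ?_ ?_
  · rw [Set.disjoint_left]
    intro z hz hz2
    exact absurd (hUq z hz) (not_le.2 hz2)
  · intro z hz hz2
    rw [hdN z (fun hzK => hz (hKU hzK)), hf'a _ (not_lt.1 hz2)]; simp
  · intro z hz
    have hzU : z ∉ U := fun hzU => absurd (hUq z hzU) (not_le.2 hz)
    rw [hdN z (fun hzK => hzU (hKU hzK)), hPH, hHN z hzU, inner_smul_left]
    have := hff (q z) (hq0 z)
    simp only [hqdef] at this ⊢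
    simp only [conj_trivial]
    linarith
  · rintro _ ⟨x, hx, rfl⟩; rw [hψφ x hx]
  · rintro _ ⟨x, hx, rfl⟩; exact (hψc x hx).differentiableAt (by norm_num)
  · rintro _ ⟨x, hx, rfl⟩; rw [hψφ x hx]; exact hfd x hx
  · rintro _ ⟨x, hx, rfl⟩; rw [hψφ x hx]; exact hsurj x hx
  · rintro _ ⟨x, hx, rfl⟩; rw [hψφ x hx]; exact hsym x hx
  · intro s; have := hh0 s; positivity
  · intro s; have := hhpi s; linarith
  · rintro _ ⟨x, hx, rfl⟩ v
    rw [hψφ x hx]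
    have h1 : HasFDerivAt (H ∘ φ) ((innerSL ℝ (P.dH (φ x))).comp (fderiv ℝ φ x)) x :=
      (hPd (φ x)).comp x (hfd x hx)
    have h2 : HasFDerivAt (fun w : V => h (‖w‖^2)) (h' (‖x‖^2) • ((2:ℝ) • innerSL ℝ x)) x := by
      have h3 : HasFDerivAt (fun w : V => ‖w‖^2) ((2:ℝ) • innerSL ℝ x) x := by
        have := (hasStrictFDerivAt_norm_sq x).hasFDerivAt
        convert! this using 1
        ext v; simp
      exact (hhd (‖x‖^2)).comp_hasFDerivAt x h3
    have h4 : HasFDerivAt (H ∘ φ) (h' (‖x‖^2) • ((2:ℝ) • innerSL ℝ x)) x := by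
      refine h2.congr_of_eventuallyEq ?_
      filter_upwards [isOpen_ball.mem_nhds hx] with y hy
      simp only [Function.comp]
      rw [hHU _ ⟨y, hy, rfl⟩, hψφ y hy]
    have h5 := congrArg (fun l : V →L[ℝ] ℝ => l v) (h1.unique h4)
    simp only [innerSL_apply_apply, _root_.smul_apply, smul_eq_mul,
      ContinuousLinearMap.comp_apply] at h5
    rw [h5]; ring

end NsqB6

end NsqPartB6

noncomputable section NsqB7
open MeasureTheory

/-- complex structure -/
def nsqJ (n : ℕ) : EuclideanSpace ℝ (Fin n ⊕ Fin n) →L[ℝ] EuclideanSpace ℝ (Fin n ⊕ Fin n) :=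
  LinearMap.toContinuousLinearMap
    { toFun := fun u => WithLp.toLp 2 (Sum.elim (fun i => - u (Sum.inr i)) (fun i => u (Sum.inl i)))
      map_add' := fun u v => by ext j; rcases j with j | j <;> simp; ring
      map_smul' := fun c u => by ext j; rcases j with j | j <;> simp }

/-- diagonal map -/
def nsqB {n : ℕ} (d : Fin n → ℝ) :
    EuclideanSpace ℝ (Fin n ⊕ Fin n) →L[ℝ] EuclideanSpace ℝ (Fin n ⊕ Fin n) :=
  LinearMap.toContinuousLinearMap
    { toFun := fun u => WithLp.toLp 2 (fun j => Sum.elim d d j * u j)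
      map_add' := fun u v => by ext j; simp; ring
      map_smul' := fun c u => by ext j; simp; ring }

variable {n : ℕ}

theorem nsqJ_inl (u : EuclideanSpace ℝ (Fin n ⊕ Fin n)) (i : Fin n) :
    nsqJ n u (Sum.inl i) = - u (Sum.inr i) := rfl
theorem nsqJ_inr (u : EuclideanSpace ℝ (Fin n ⊕ Fin n)) (i : Fin n) :
    nsqJ n u (Sum.inr i) = u (Sum.inl i) := rfl
theorem nsqB_apply (d : Fin n → ℝ) (u : EuclideanSpace ℝ (Fin n ⊕ Fin n)) (j : Fin n ⊕ Fin n) :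
    nsqB d u j = Sum.elim d d j * u j := rfl

theorem nsq_inner (u v : EuclideanSpace ℝ (Fin n ⊕ Fin n)) : inner ℝ u v = ∑ j, u j * v j := by
  rw [PiLp.inner_apply]; simp [mul_comm]

theorem nsq_omega (u v : EuclideanSpace ℝ (Fin n ⊕ Fin n)) :
    omegaSt u v = inner ℝ (nsqJ n u) v := by
  rw [nsq_inner, Fintype.sum_sum_type, omegaSt, ← Finset.sum_add_distrib]
  refine Finset.sum_congr rfl fun i _ => ?_
  rw [nsqJ_inl, nsqJ_inr]; ring

theorem nsq_final (hn : 1 ≤ n) {R r : ℝ} (hr : 0 < r) (hR : r < R)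
    (φ : EuclideanSpace ℝ (Fin n ⊕ Fin n) → EuclideanSpace ℝ (Fin n ⊕ Fin n))
    (hφ : ContDiffOn ℝ 2 φ (closedBall 0 R)) (hinj : InjOn φ (closedBall 0 R))
    (hmap : ∀ x ∈ closedBall (0 : EuclideanSpace ℝ (Fin n ⊕ Fin n)) R,
      φ x (Sum.inl ⟨0, hn⟩) ^ 2 + φ x (Sum.inr ⟨0, hn⟩) ^ 2 ≤ r ^ 2)
    (hsym : ∀ x ∈ closedBall (0 : EuclideanSpace ℝ (Fin n ⊕ Fin n)) R, ∀ u v,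
        omegaSt (fderivWithin ℝ φ (closedBall 0 R) x u)
            (fderivWithin ℝ φ (closedBall 0 R) x v) = omegaSt u v) : False := by
  have hR0 : 0 < R := hr.trans hR
  obtain ⟨a, ha1, ha2⟩ : ∃ a, r^2 < a ∧ a < R^2 := exists_between (by gcongr)
  have ha0 : 0 < a := lt_trans (by positivity) ha1
  obtain ⟨C, hC⟩ := (isCompact_closedBall (0 : EuclideanSpace ℝ (Fin n ⊕ Fin n)) R).exists_bound_of_continuousOn
    hφ.continuousOn
  set δ := min (1/2) ((a - r^2)/(C^2+1)) with hδ
  have hδ0 : 0 < δ := lt_min (by norm_num) (div_pos (by linarith) (by positivity))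
  have hδ1 : δ ≤ 1/2 := min_le_left _ _
  have hδ2 : δ * (C^2+1) ≤ a - r^2 := by
    rw [← le_div_iff₀ (by positivity)]; exact min_le_right _ _
  set i0 : Fin n := ⟨0, hn⟩ with hi0
  set d : Fin n → ℝ := fun i => if i = i0 then 1 else δ with hd
  have hd0 : d i0 = 1 := by simp [hd]
  have hdv : ∀ j : Fin n ⊕ Fin n, Sum.elim d d j = 1 ∨ Sum.elim d d j = δ := by
    intro j
    rcases j with j | j <;> by_cases hj : j = i0 <;> simp [hd, hj]
  have hbs : ball (0 : EuclideanSpace ℝ (Fin n ⊕ Fin n)) R ⊆ closedBall 0 R := ball_subset_closedBall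
  refine nsq_abs (nsqJ n) ?_ ?_ (nsqB d) ?_ ?_ δ hδ0 ?_ (EuclideanSpace.single (Sum.inl i0) 1) ?_ ?_ ?_
    R a hR0 ha0 ha2 φ (hφ.mono hbs) (hinj.mono hbs) ?_ ?_
  · intro x
    ext j
    rcases j with j | j
    · rw [nsqJ_inl, nsqJ_inr]; rfl
    · rw [nsqJ_inr, nsqJ_inl]; rfl
  · intro x y
    rw [nsq_inner, nsq_inner, Fintype.sum_sum_type, Fintype.sum_sum_type]
    simp only [nsqJ_inl, nsqJ_inr, neg_mul, mul_neg, Finset.sum_neg_distrib]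
    ring
  · intro x y
    rw [nsq_inner, nsq_inner]
    refine Finset.sum_congr rfl fun j _ => ?_
    rw [nsqB_apply, nsqB_apply]; ring
  · intro x
    ext j
    rcases j with j | j
    · rw [nsqB_apply, nsqJ_inl, nsqJ_inl, nsqB_apply]; simp
    · rw [nsqB_apply, nsqJ_inr, nsqJ_inr, nsqB_apply]; simp
  · intro x
    rw [nsq_inner, EuclideanSpace.real_norm_sq_eq, Finset.mul_sum]
    refine Finset.sum_le_sum fun j _ => ?_
    rw [nsqB_apply]
    rcases hdv j with h | h <;> rw [h] <;> nlinarith [sq_nonneg (x j)]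
  · simp
  · ext j
    rw [nsqB_apply]
    by_cases hj : j = Sum.inl i0
    · rw [hj]; simp [hd0]
    · simp [hj]
  · intro κ hκ1 hκ2
    have hpi := Real.pi_pos
    obtain ⟨γ1, hγ1, hg1⟩ := nsq_gap1 (a := 2 * κ) (j := 1) (by push_cast; linarith)
      (by push_cast; linarith)
    obtain ⟨γ2, hγ2, hg2⟩ := nsq_gap1 (a := 2 * κ * δ) (j := 0)
      (by push_cast; have := hpi.trans hκ1; simp; positivity)
      (by push_cast; nlinarith)
    refine ⟨min γ1 γ2, lt_min hγ1 hγ2, fun k v => ?_⟩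
    have hkp : 0 < 1 + |(k:ℝ)| := by positivity
    have hmin : 0 < min γ1 γ2 := lt_min hγ1 hγ2
    refine (sq_le_sq₀ (by positivity) (norm_nonneg _)).1 ?_
    rw [mul_pow, EuclideanSpace.real_norm_sq_eq, EuclideanSpace.real_norm_sq_eq, Finset.mul_sum]
    refine Finset.sum_le_sum fun j _ => ?_
    have hw : ((2 * Real.pi * (k:ℝ)) • v - (2 * κ) • nsqB d v) j
        = (2 * Real.pi * k - 2 * κ * Sum.elim d d j) * v j := by
      simp only [PiLp.sub_apply, PiLp.smul_apply, smul_eq_mul, nsqB_apply]; ring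
    rw [hw, mul_pow _ (v.ofLp j)]
    refine mul_le_mul_of_nonneg_right ?_ (sq_nonneg (v.ofLp j))
    rw [← sq_abs (2 * Real.pi * k - 2 * κ * Sum.elim d d j)]
    refine pow_le_pow_left₀ (by positivity) ?_ 2
    rcases hdv j with h | h
    · rw [h, mul_one]
      exact (mul_le_mul_of_nonneg_right (min_le_left _ _) hkp.le).trans (hg1 k)
    · rw [h]
      exact (mul_le_mul_of_nonneg_right (min_le_right _ _) hkp.le).trans (hg2 k)
  · intro x hx
    have h1 := hmap x (hbs hx)
    have h2 : ‖φ x‖^2 ≤ C^2 := pow_le_pow_left₀ (norm_nonneg _) (hC x (hbs hx)) 2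
    have h3 : inner ℝ (nsqB d (φ x)) (φ x) ≤
        φ x (Sum.inl i0) ^ 2 + φ x (Sum.inr i0) ^ 2 + δ * ‖φ x‖^2 := by
      rw [nsq_inner, EuclideanSpace.real_norm_sq_eq, Fintype.sum_sum_type, Fintype.sum_sum_type]
      have key : ∀ s : Fin n → Fin n ⊕ Fin n, (∀ i, Sum.elim d d (s i) = d i) →
          ∑ i, nsqB d (φ x) (s i) * φ x (s i) ≤ φ x (s i0)^2 + δ * ∑ i, φ x (s i)^2 := by
        intro s hs
        have : φ x (s i0)^2 = ∑ i, if i = i0 then φ x (s i)^2 else 0 := by simp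
        rw [this, Finset.mul_sum, ← Finset.sum_add_distrib]
        refine Finset.sum_le_sum fun i _ => ?_
        rw [nsqB_apply, hs i]
        by_cases hi : i = i0
        · simp only [hd, hi, if_true]; nlinarith [sq_nonneg (φ x (s i0))]
        · simp only [hd, hi, if_false]; nlinarith
      have k1 := key Sum.inl (fun i => rfl)
      have k2 := key Sum.inr (fun i => rfl)
      linarith
    have h4 := mul_le_mul_of_nonneg_left h2 hδ0.le
    linarith
  · intro x hx u v
    have := hsym x (hbs hx) u v
    rw [nsq_omega, nsq_omega, fderivWithin_of_mem_nhds (closedBall_mem_nhds_of_mem hx)] at this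
    exact this

end NsqB7

/-- **Gromov non-squeezing.** For `n ≥ 1` and `R > r > 0` there is no smooth
symplectic embedding of the standard closed ball `B_R ⊆ ℝ^{2n}` into the cylinder
`D²_r × ℝ^{2n-2} = {x : p₁² + q₁² ≤ r²}`, i.e. no smooth injective map
`φ : B_R → ℝ^{2n}` with image in the cylinder such that `φ*ω_st = ω_st`. -/
theorem gromov_nonsqueezing
    {n : ℕ} (hn : 1 ≤ n) {R r : ℝ} (hr : 0 < r) (hR : r < R) :
    ¬ ∃ φ : EuclideanSpace ℝ (Fin n ⊕ Fin n) → EuclideanSpace ℝ (Fin n ⊕ Fin n),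
      ContDiffOn ℝ (⊤ : ℕ∞) φ (closedBall 0 R) ∧
      InjOn φ (closedBall 0 R) ∧
      MapsTo φ (closedBall 0 R)
        {x : EuclideanSpace ℝ (Fin n ⊕ Fin n) |
          x (Sum.inl ⟨0, hn⟩) ^ 2 + x (Sum.inr ⟨0, hn⟩) ^ 2 ≤ r ^ 2} ∧
      ∀ x ∈ closedBall (0 : EuclideanSpace ℝ (Fin n ⊕ Fin n)) R, ∀ u v,
        omegaSt (fderivWithin ℝ φ (closedBall 0 R) x u)
            (fderivWithin ℝ φ (closedBall 0 R) x v) = omegaSt u v := by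
  rintro ⟨φ, h1, h2, h3, h4⟩
  exact nsq_final hn hr hR φ (h1.of_le (WithTop.coe_le_coe.2 (le_top : (2 : ℕ∞) ≤ ⊤))) h2 h3 h4
end
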